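/- Let L > 1 be an integer, let J be a finite-range step distribution invariant under lattice reflections and rotations containing the nearest-neighbour vectors, let γ ∈ (0,1/3), and let |s| be sufficiently small (depending only on J and γ). For every f ∈ C_c^∞(R^2) with ∫ f dx = 0 and every admissible discretisation (f_ε) of f: lim_{ε→0} lim_{N→∞} lim_{m^2↓0} (f_ε, C̃^{Λ_N}(s,m^2) f_ε) = (v_J^2 + s)^{−1} · (f, (−Δ_{R^2})^{−1} f)_{R^2}, where f_ε is identified with a function on Λ_N for N large enough that its support fits in the torus. -/

import Mathlib

open Filter Real MeasureTheory

noncomputable section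

/-- The two-dimensional discrete torus of side length `n`. -/
abbrev Torus (n : ℕ) := ZMod n × ZMod n

/-- Canonical projection `ℤ² → Λ_n`. -/
def torusProj (n : ℕ) (x : ℤ × ℤ) : Torus n := ((x.1 : ZMod n), (x.2 : ZMod n))

/-- A finite-range step distribution: a finite subset of `ℤ²∖{0}` invariant under lattice
reflections and rotations and containing the nearest-neighbour vectors. -/
structure StepDist (J : Finset (ℤ × ℤ)) : Prop where
  not_zero : ((0 : ℤ), (0 : ℤ)) ∉ J
  nn₁ : ((1 : ℤ), (0 : ℤ)) ∈ J
  nn₂ : ((-1 : ℤ), (0 : ℤ)) ∈ J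
  nn₃ : ((0 : ℤ), (1 : ℤ)) ∈ J
  nn₄ : ((0 : ℤ), (-1 : ℤ)) ∈ J
  refl₁ : ∀ x ∈ J, ((-x.1, x.2) : ℤ × ℤ) ∈ J
  refl₂ : ∀ x ∈ J, ((x.1, -x.2) : ℤ × ℤ) ∈ J
  rot : ∀ x ∈ J, ((-x.2, x.1) : ℤ × ℤ) ∈ J

/-- The normalised range-`J` Laplacian on the torus `Λ_n`. -/
def laplacianJ (J : Finset (ℤ × ℤ)) (n : ℕ) (f : Torus n → ℝ) (x : Torus n) : ℝ :=
  (J.card : ℝ)⁻¹ * ∑ y ∈ J, (f (x + torusProj n y) - f x)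

/-- Configuration space of the Discrete Gaussian model: `2πℤ`-valued fields pinned at `0`. -/
def DGConfigs (n : ℕ) : Set (Torus n → ℝ) :=
  {σ | (∀ x, ∃ k : ℤ, σ x = 2 * Real.pi * k) ∧ σ 0 = 0}

/-- The energy `(1/(2β)) (σ, −Δ_J σ)`. -/
def dgEnergy (J : Finset (ℤ × ℤ)) (n : ℕ) (β : ℝ) (σ : Torus n → ℝ) : ℝ :=
  (1 / (2 * β)) * ∑' x : Torus n, σ x * -(laplacianJ J n σ x)

/-- Expectation of the Discrete Gaussian model on `Λ_n` at temperature `β`. -/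
def dgExpect (J : Finset (ℤ × ℤ)) (n : ℕ) (β : ℝ) (F : (Torus n → ℝ) → ℝ) : ℝ :=
  (∑' σ : DGConfigs n, Real.exp (-(dgEnergy J n β σ.1)) * F σ.1) /
    (∑' σ : DGConfigs n, Real.exp (-(dgEnergy J n β σ.1)))

/-- Pairing `(g, σ)` of a (finitely supported) `g : ℤ² → ℝ`, identified with a function on the
torus via the canonical projection, with a field `σ` on the torus. -/
def torusPairing (n : ℕ) (g : ℤ × ℤ → ℝ) (σ : Torus n → ℝ) : ℝ :=
  ∑' x : ℤ × ℤ, g x * σ (torusProj n x)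

/-- `v_J² = (2|J|)⁻¹ Σ_{x∈J} x₁²`. -/
def vJsq (J : Finset (ℤ × ℤ)) : ℝ :=
  (2 * (J.card : ℝ))⁻¹ * ∑ x ∈ J, ((x.1 : ℝ)) ^ 2

/-- Continuum Fourier transform `f̂(p) = ∫ f(x) e^{−i p·x} dx` on `ℝ²`. -/
def contFT (f : ℝ × ℝ → ℝ) (p : ℝ × ℝ) : ℂ :=
  ∫ x : ℝ × ℝ, (f x : ℂ) * Complex.exp (-Complex.I * ((p.1 * x.1 + p.2 * x.2 : ℝ) : ℂ))

/-- `(f, (−Δ_{ℝ²})⁻¹ f) = (2π)⁻² ∫ |p|⁻² |f̂(p)|² dp`. -/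
def gffPairing (f : ℝ × ℝ → ℝ) : ℝ :=
  ((2 * Real.pi) ^ 2)⁻¹ * ∫ p : ℝ × ℝ, Complex.normSq (contFT f p) / (p.1 ^ 2 + p.2 ^ 2)

/-- The four nearest-neighbour directions in `ℤ²`. -/
def dirsZ : Finset (ℤ × ℤ) := {((1 : ℤ), (0 : ℤ)), (-1, 0), (0, 1), (0, -1)}

/-- `(f_ε)` is an admissible discretisation of `f` with constant `C_f`. -/
structure IsAdmissible (f : ℝ × ℝ → ℝ) (fε : ℝ → (ℤ × ℤ) → ℝ) (Cf : ℝ) : Prop where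
  finite_supp : ∀ ε ∈ Set.Ioo (0 : ℝ) 1, (Function.support (fε ε)).Finite
  sum_zero : ∀ ε ∈ Set.Ioo (0 : ℝ) 1, ∑' x : ℤ × ℤ, fε ε x = 0
  grad0 : ∀ ε ∈ Set.Ioo (0 : ℝ) 1, ∀ x : ℤ × ℤ, |fε ε x| ≤ Cf * ε ^ 2
  grad1 : ∀ ε ∈ Set.Ioo (0 : ℝ) 1, ∀ x : ℤ × ℤ, ∀ μ ∈ dirsZ,
    |ε⁻¹ * (fε ε (x + μ) - fε ε x)| ≤ Cf * ε ^ 2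
  grad2 : ∀ ε ∈ Set.Ioo (0 : ℝ) 1, ∀ x : ℤ × ℤ, ∀ μ ∈ dirsZ, ∀ ν ∈ dirsZ,
    |ε⁻¹ ^ 2 * (fε ε (x + μ + ν) - fε ε (x + ν) - fε ε (x + μ) + fε ε x)| ≤ Cf * ε ^ 2
  supp : ∀ ε ∈ Set.Ioo (0 : ℝ) 1, ∀ x : ℤ × ℤ, fε ε x ≠ 0 →
    |(x.1 : ℝ)| ≤ Cf * ε⁻¹ ∧ |(x.2 : ℝ)| ≤ Cf * ε⁻¹
  approx : ∀ δ > (0 : ℝ), ∃ ε₀ > (0 : ℝ), ∀ ε ∈ Set.Ioo (0 : ℝ) 1, ε < ε₀ →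
    ∀ x : ℤ × ℤ, |ε⁻¹ ^ 2 * fε ε x - f (ε * x.1, ε * x.2)| ≤ δ

/-- The unnormalised nearest-neighbour Laplacian on the torus `Λ_n`. -/
def lapNN (n : ℕ) (f : Torus n → ℝ) (x : Torus n) : ℝ :=
  ∑ μ ∈ dirsZ, (f (x + torusProj n μ) - f x)

/-- Identification of a finitely supported `g : ℤ² → ℝ` with a function on the torus. -/
def toTorus (n : ℕ) (g : ℤ × ℤ → ℝ) (y : Torus n) : ℝ :=
  ∑' x : ℤ × ℤ, if torusProj n x = y then g x else 0

/-- `IsCtildeVal J n γ s m2 g val` says that `val = (g, C̃^{Λ_n}(s,m²) g)`, where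
`C̃(s,m²) = γ(1+sγΔ) + (1+sγΔ) C(s,m²) (1+sγΔ)`, `C(s,m²) = (C(m²)⁻¹ − sΔ)⁻¹` and
`C(m²) = (−Δ_J + m²)⁻¹ − γ·id`.  The operator inverses are encoded by their defining
equations: writing `h = (1+sγΔ)g`, `u = C(s,m²)h` and `w = h + sΔu`, the field `u` is
characterised by `(−Δ_J + m²)(u + γw) = w`, and then
`(g, C̃ g) = γ(g,h) + (g, (1+sγΔ)u)`. -/
def IsCtildeVal (J : Finset (ℤ × ℤ)) (n : ℕ) (γ s m2 : ℝ) (g : Torus n → ℝ) (val : ℝ) :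
    Prop :=
  ∃ u : Torus n → ℝ,
    (∀ x : Torus n,
      -(laplacianJ J n
          (fun y => u y + γ * (g y + s * γ * lapNN n g y + s * lapNN n u y)) x)
        + m2 * (u x + γ * (g x + s * γ * lapNN n g x + s * lapNN n u x))
        = g x + s * γ * lapNN n g x + s * lapNN n u x) ∧
    val = γ * (∑' x : Torus n, g x * (g x + s * γ * lapNN n g x))
        + ∑' x : Torus n, g x * (u x + s * γ * lapNN n u x)

def dotp (p : ℝ × ℝ) (x : ℤ × ℤ) : ℝ := p.1 * x.1 + p.2 * x.2

/-- Symbol of the (negative) unnormalised Laplacian with step set `S`. -/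
def lamS (S : Finset (ℤ × ℤ)) (p : ℝ × ℝ) : ℝ := ∑ y ∈ S, (1 - Real.cos (dotp p y))

def lamJ (J : Finset (ℤ × ℤ)) (p : ℝ × ℝ) : ℝ := (J.card : ℝ)⁻¹ * lamS J p

def symQ (γ s : ℝ) (p : ℝ × ℝ) : ℝ := 1 - s * γ * lamS dirsZ p

def symD (J : Finset (ℤ × ℤ)) (γ s : ℝ) (p : ℝ × ℝ) : ℝ :=
  lamJ J p * symQ γ s p + s * lamS dirsZ p

/-- Lattice Fourier transform. -/
def latFT (g : ℤ × ℤ → ℝ) (p : ℝ × ℝ) : ℂ :=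
  ∑' x : ℤ × ℤ, (g x : ℂ) * Complex.exp (-Complex.I * (dotp p x : ℂ))

def pk (n : ℕ) (k : Torus n) : ℝ × ℝ :=
  (2 * π * k.1.valMinAbs / n, 2 * π * k.2.valMinAbs / n)

def chr (n : ℕ) [NeZero n] (k x : Torus n) : ℂ := ZMod.stdAddChar (-(k.1 * x.1 + k.2 * x.2))

def hatT (n : ℕ) [NeZero n] (f : Torus n → ℝ) (k : Torus n) : ℂ := ∑ x, (f x : ℂ) * chr n k x

lemma chr_add (n : ℕ) [NeZero n] (k x y : Torus n) : chr n k (x + y) = chr n k x * chr n k y := by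
  unfold chr
  rw [← AddChar.map_add_eq_mul]
  congr 1
  simp only [Prod.fst_add, Prod.snd_add]
  ring

lemma chr_proj (n : ℕ) [NeZero n] (k : Torus n) (x : ℤ × ℤ) :
    chr n k (torusProj n x) = Complex.exp (-Complex.I * (dotp (pk n k) x : ℂ)) := by
  have h : -(k.1 * (torusProj n x).1 + k.2 * (torusProj n x).2) =
      ((-(k.1.valMinAbs * x.1 + k.2.valMinAbs * x.2) : ℤ) : ZMod n) := by
    push_cast
    simp [torusProj]
  unfold chr
  rw [h, ZMod.stdAddChar_coe]
  congr 1
  simp only [dotp, pk]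
  push_cast
  ring

lemma conj_chr (n : ℕ) [NeZero n] (k x : Torus n) :
    (starRingEnd ℂ) (chr n k x) = ZMod.stdAddChar (k.1 * x.1 + k.2 * x.2) := by
  unfold chr
  rw [AddChar.map_neg_eq_conj]
  simp

lemma sum_chr (n : ℕ) [NeZero n] (x y : Torus n) :
    ∑ k : Torus n, (starRingEnd ℂ) (chr n k x) * chr n k y = if x = y then (n : ℂ) ^ 2 else 0 := by
  have h : ∀ k : Torus n, (starRingEnd ℂ) (chr n k x) * chr n k y =
      ZMod.stdAddChar (k.1 * (x.1 - y.1)) * ZMod.stdAddChar (k.2 * (x.2 - y.2)) := by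
    intro k
    rw [conj_chr, chr, ← AddChar.map_add_eq_mul, ← AddChar.map_add_eq_mul]
    congr 1
    ring
  simp_rw [h]
  rw [Fintype.sum_prod_type]
  simp_rw [← Finset.mul_sum, ← Finset.sum_mul]
  rw [AddChar.sum_mulShift _ (ZMod.isPrimitive_stdAddChar n),
    AddChar.sum_mulShift _ (ZMod.isPrimitive_stdAddChar n)]
  rcases x with ⟨x1, x2⟩
  rcases y with ⟨y1, y2⟩
  simp only [sub_eq_zero, Prod.mk.injEq, ZMod.card]
  by_cases h1 : x1 = y1 <;> by_cases h2 : x2 = y2 <;> simp [h1, h2, sq]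

lemma parseval (n : ℕ) [NeZero n] (a b : Torus n → ℝ) :
    ((∑ x, a x * b x : ℝ) : ℂ) =
      ((n : ℂ) ^ 2)⁻¹ * ∑ k, (starRingEnd ℂ) (hatT n a k) * hatT n b k := by
  have hn : (n : ℂ) ≠ 0 := Nat.cast_ne_zero.mpr (NeZero.ne n)
  have h : ∑ k, (starRingEnd ℂ) (hatT n a k) * hatT n b k =
      ∑ x, ∑ y, (a x : ℂ) * b y * ∑ k, (starRingEnd ℂ) (chr n k x) * chr n k y := by
    simp only [hatT, map_sum, map_mul, Complex.conj_ofReal]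
    simp_rw [Finset.sum_mul_sum, Finset.mul_sum]
    rw [Finset.sum_comm]
    refine Finset.sum_congr rfl fun x _ => ?_
    rw [Finset.sum_comm]
    refine Finset.sum_congr rfl fun y _ => Finset.sum_congr rfl fun k _ => ?_
    ring
  rw [h]
  simp only [sum_chr, mul_ite, mul_zero, Finset.sum_ite_eq, Finset.mem_univ, if_true]
  rw [← Finset.sum_mul]
  push_cast
  field_simp

lemma hatT_add (n : ℕ) [NeZero n] (a b : Torus n → ℝ) (k : Torus n) :
    hatT n (fun x => a x + b x) k = hatT n a k + hatT n b k := by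
  simp [hatT, add_mul, Finset.sum_add_distrib]

lemma hatT_smul (n : ℕ) [NeZero n] (c : ℝ) (b : Torus n → ℝ) (k : Torus n) :
    hatT n (fun x => c * b x) k = c * hatT n b k := by
  simp [hatT, mul_assoc, Finset.mul_sum]

lemma hatT_neg (n : ℕ) [NeZero n] (b : Torus n → ℝ) (k : Torus n) :
    hatT n (fun x => - b x) k = - hatT n b k := by
  simp [hatT]

lemma hatT_shift (n : ℕ) [NeZero n] (f : Torus n → ℝ) (y : ℤ × ℤ) (k : Torus n) :
    hatT n (fun x => f (x + torusProj n y)) k =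
      Complex.exp (Complex.I * (dotp (pk n k) y : ℂ)) * hatT n f k := by
  unfold hatT
  rw [Finset.mul_sum, ← Equiv.sum_comp (Equiv.addRight (torusProj n y)) (fun x => 
    Complex.exp (Complex.I * (dotp (pk n k) y : ℂ)) * ((f x : ℂ) * chr n k x))]
  refine Finset.sum_congr rfl fun x _ => ?_
  simp only [Equiv.coe_addRight, chr_add, chr_proj]
  have : Complex.exp (Complex.I * (dotp (pk n k) y : ℂ)) * 
    Complex.exp (-Complex.I * (dotp (pk n k) y : ℂ)) = 1 := by
    rw [← Complex.exp_add]; simp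
  linear_combination (-(f (x + torusProj n y)) * chr n k x : ℂ) * this

lemma sum_exp_symm (S : Finset (ℤ × ℤ)) (hS : ∀ y ∈ S, -y ∈ S) (p : ℝ × ℝ) :
    ∑ y ∈ S, (Complex.exp (Complex.I * (dotp p y : ℂ)) - 1) = -(lamS S p : ℂ) := by
  have h1 : ∑ y ∈ S, (Complex.exp (Complex.I * (dotp p y : ℂ)) - 1) =
    ∑ y ∈ S, (Complex.exp (-(Complex.I * (dotp p y : ℂ))) - 1) := by
    refine Finset.sum_nbij' (fun y => -y) (fun y => -y) hS hS (by simp) (by simp) ?_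
    intro y _
    congr 2
    simp [dotp]
    ring
  have h2 : ∑ y ∈ S, (Complex.exp (Complex.I * (dotp p y : ℂ)) - 1) + 
    ∑ y ∈ S, (Complex.exp (-(Complex.I * (dotp p y : ℂ))) - 1) = -2 * (lamS S p : ℂ) := by
    rw [← Finset.sum_add_distrib, lamS]
    push_cast
    rw [Finset.mul_sum]
    refine Finset.sum_congr rfl fun y _ => ?_
    rw [Complex.cos, mul_comm Complex.I, neg_mul]
    ring
  rw [← h1] at h2
  linear_combination h2 / 2

lemma hatT_lap (n : ℕ) [NeZero n] (S : Finset (ℤ × ℤ)) (hS : ∀ y ∈ S, -y ∈ S) (f : Torus n → ℝ)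
    (k : Torus n) :
    hatT n (fun x => ∑ y ∈ S, (f (x + torusProj n y) - f x)) k =
      -(lamS S (pk n k) : ℂ) * hatT n f k := by
  rw [← sum_exp_symm S hS, Finset.sum_mul]
  have : hatT n (fun x => ∑ y ∈ S, (f (x + torusProj n y) - f x)) k =
    ∑ y ∈ S, (hatT n (fun x => f (x + torusProj n y)) k - hatT n f k) := by
    simp only [hatT]
    simp_rw [← Finset.sum_sub_distrib]
    rw [Finset.sum_comm]
    refine Finset.sum_congr rfl fun y _ => ?_
    push_cast
    rw [Finset.sum_mul]
    exact Finset.sum_congr rfl fun _ _ => by ring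
  rw [this]
  refine Finset.sum_congr rfl fun y _ => ?_
  rw [hatT_shift]; ring

lemma dirs_symm : ∀ y ∈ dirsZ, -y ∈ dirsZ := by
  decide

lemma StepDist.symm {J : Finset (ℤ × ℤ)} (hJ : StepDist J) : ∀ y ∈ J, -y ∈ J := fun y hy =>
  hJ.refl₂ _ (hJ.refl₁ _ hy)

lemma hatT_toTorus (n : ℕ) [NeZero n] (g : ℤ × ℤ → ℝ) (hg : (Function.support g).Finite)
    (k : Torus n) : hatT n (toTorus n g) k = latFT g (pk n k) := by
  have h1 : ∀ y, toTorus n g y = ∑ x ∈ hg.toFinset, if torusProj n x = y then g x else 0 := by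
    intro y
    refine tsum_eq_sum fun x hx => ?_
    have : g x = 0 := by simpa using hx
    simp [this]
  have h2 : latFT g (pk n k) = ∑ x ∈ hg.toFinset, (g x : ℂ) * chr n k (torusProj n x) := by
    unfold latFT
    rw [tsum_eq_sum (s := hg.toFinset)]
    · simp_rw [chr_proj]
    · intro x hx
      have : g x = 0 := by simpa using hx
      simp [this]
  rw [h2]
  simp only [hatT, h1]
  push_cast
  simp_rw [Finset.sum_mul]
  rw [Finset.sum_comm]
  refine Finset.sum_congr rfl fun x _ => ?_
  rw [Finset.sum_eq_single (torusProj n x)]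
  · simp
  · intro y _ hy
    simp [Ne.symm hy]
  · simp

lemma ctilde_val (J : Finset (ℤ × ℤ)) (hJ : StepDist J) (n : ℕ) [NeZero n] (γ s m2 : ℝ)
    (g : ℤ × ℤ → ℝ) (hg : (Function.support g).Finite) (val : ℝ)
    (hD : ∀ k : Torus n, symD J γ s (pk n k) + m2 * symQ γ s (pk n k) ≠ 0)
    (h : IsCtildeVal J n γ s m2 (toTorus n g) val) :
    val = ((n : ℝ) ^ 2)⁻¹ * ∑ k : Torus n, Complex.normSq (latFT g (pk n k)) *
      (symQ γ s (pk n k) / (symD J γ s (pk n k) + m2 * symQ γ s (pk n k))) := by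
  obtain ⟨u, hu, hval⟩ := h
  set G := toTorus n g with hG
  have hGk : ∀ k, hatT n G k = latFT g (pk n k) := fun k => hatT_toTorus n g hg k
  have hNN : ∀ (f : Torus n → ℝ) k, hatT n (lapNN n f) k = -(lamS dirsZ (pk n k) : ℂ) * hatT n f k :=
    fun f k => hatT_lap n dirsZ dirs_symm f k
  have hJJ : ∀ (f : Torus n → ℝ) k, hatT n (laplacianJ J n f) k =
      -(lamJ J (pk n k) : ℂ) * hatT n f k := by
    intro f k
    have := hatT_smul n (J.card : ℝ)⁻¹ (fun x => ∑ y ∈ J, (f (x + torusProj n y) - f x)) k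
    unfold laplacianJ
    rw [this, hatT_lap n J hJ.symm, lamJ]
    push_cast
    ring
  have hh : ∀ k, hatT n (fun x => G x + s * γ * lapNN n G x + s * lapNN n u x) k =
      (symQ γ s (pk n k) : ℂ) * hatT n G k - s * (lamS dirsZ (pk n k) : ℂ) * hatT n u k := by
    intro k
    rw [hatT_add, hatT_add, hatT_smul, hatT_smul, hNN, hNN, symQ]
    push_cast
    ring
  have hk : ∀ k, ((symD J γ s (pk n k) + m2 * symQ γ s (pk n k) : ℝ) : ℂ) * hatT n u k =
      (1 - γ * (lamJ J (pk n k) + m2)) * symQ γ s (pk n k) * hatT n G k := by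
    intro k
    have := congrArg (fun f => hatT n f k) (funext hu)
    rw [hatT_add, hatT_neg, hatT_smul n m2, hJJ, hatT_add, hatT_smul n γ, hh] at this
    simp only [symD, symQ] at this ⊢
    push_cast at this ⊢
    linear_combination this
  have hval2 : (val : ℂ) = ((n : ℂ) ^ 2)⁻¹ * ∑ k : Torus n, 
      (starRingEnd ℂ) (hatT n G k) * (γ * symQ γ s (pk n k) * hatT n G k 
        + symQ γ s (pk n k) * hatT n u k) := by
    rw [hval, tsum_fintype, tsum_fintype]
    push_cast [-Complex.ofReal_sum]
    rw [parseval, parseval, mul_left_comm, ← mul_add, Finset.mul_sum, ← Finset.sum_add_distrib]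
    congr 1
    refine Finset.sum_congr rfl fun k _ => ?_
    rw [hatT_add, hatT_add, hatT_smul, hatT_smul, hNN, hNN, symQ]
    push_cast
    ring
  have : (val : ℂ) = ((((n : ℝ) ^ 2)⁻¹ * ∑ k : Torus n, Complex.normSq (latFT g (pk n k)) *
      (symQ γ s (pk n k) / (symD J γ s (pk n k) + m2 * symQ γ s (pk n k))) : ℝ) : ℂ) := by
    rw [hval2]
    push_cast
    congr 1
    refine Finset.sum_congr rfl fun k _ => ?_
    rw [← hGk, Complex.normSq_eq_conj_mul_self,
      mul_assoc ((starRingEnd ℂ) (hatT n G k))]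
    congr 1
    have hne : ((symD J γ s (pk n k) + m2 * symQ γ s (pk n k) : ℝ) : ℂ) ≠ 0 := by
      exact_mod_cast hD k
    have hkk := hk k
    push_cast at hne hkk
    rw [mul_div_assoc', eq_div_iff hne]
    have e : (symD J γ s (pk n k) : ℂ) = lamJ J (pk n k) * symQ γ s (pk n k) 
      + s * lamS dirsZ (pk n k) := by simp [symD]
    have e2 : (symQ γ s (pk n k) : ℂ) = 1 - s * γ * lamS dirsZ (pk n k) := by simp [symQ]
    linear_combination (symQ γ s (pk n k) : ℂ) * hkk 
      + γ * symQ γ s (pk n k) * hatT n G k * e + symQ γ s (pk n k) * hatT n G k * e2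
  exact_mod_cast this

/-- Unit cells of the lattice of mesh `1/R`. -/
def cell (R : ℝ) (x : ℤ × ℤ) : Set (ℝ × ℝ) :=
  Set.Ico ((x.1 : ℝ) / R) ((x.1 + 1 : ℝ) / R) ×ˢ Set.Ico ((x.2 : ℝ) / R) ((x.2 + 1 : ℝ) / R)

def flr (R : ℝ) (t : ℝ × ℝ) : ℤ × ℤ := (⌊R * t.1⌋, ⌊R * t.2⌋)

lemma mem_cell {R : ℝ} (hR : 0 < R) (x : ℤ × ℤ) (t : ℝ × ℝ) : t ∈ cell R x ↔ flr R t = x := by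
  rcases x with ⟨x1, x2⟩
  simp only [cell, flr, Set.mem_prod, Set.mem_Ico, Prod.mk.injEq, Int.floor_eq_iff, div_le_iff₀ hR,
    lt_div_iff₀ hR, mul_comm R]

lemma measurable_flr (R : ℝ) : Measurable (flr R) := by
  unfold flr
  exact (Int.measurable_floor.comp (measurable_fst.const_mul R)).prodMk
    (Int.measurable_floor.comp (measurable_snd.const_mul R))

lemma volume_cell {R : ℝ} (hR : 0 < R) (x : ℤ × ℤ) : (volume.real (cell R x)) = (R ^ 2)⁻¹ := by
  rw [cell, Measure.volume_eq_prod, measureReal_prod_prod, Real.volume_real_Ico, Real.volume_real_Ico]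
  have : ∀ a : ℝ, (a + 1) / R - a / R = R⁻¹ := by intro a; ring
  rw [this, this, max_eq_left (by positivity)]
  ring

lemma integral_step {E : Type*} [NormedAddCommGroup E] [NormedSpace ℝ E] [CompleteSpace E]
    {R : ℝ} (hR : 0 < R) (H : ℤ × ℤ → E) (S : Finset (ℤ × ℤ)) (hH : ∀ x ∉ S, H x = 0) :
    ∫ t, H (flr R t) = (R ^ 2)⁻¹ • ∑ x ∈ S, H x := by
  have h1 : ∀ t, H (flr R t) = ∑ x ∈ S, (cell R x).indicator (fun _ => H x) t := by
    intro t
    by_cases h : flr R t ∈ S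
    · rw [Finset.sum_eq_single_of_mem _ h]
      · rw [Set.indicator_of_mem]
        rw [mem_cell hR]
      · intro x _ hx
        rw [Set.indicator_of_notMem]
        rw [mem_cell hR]
        exact hx.symm
    · rw [hH _ h, Finset.sum_eq_zero]
      intro x hx
      rw [Set.indicator_of_notMem]
      rw [mem_cell hR]
      rintro rfl
      exact h hx
  have hm : ∀ x, MeasurableSet (cell R x) := fun x => measurableSet_Ico.prod measurableSet_Ico
  have hv : ∀ x, volume (cell R x) ≠ ⊤ := by
    intro x
    rw [cell, Measure.volume_eq_prod, Measure.prod_prod, Real.volume_Ico, Real.volume_Ico]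
    exact ENNReal.mul_ne_top ENNReal.ofReal_ne_top ENNReal.ofReal_ne_top
  simp_rw [h1]
  rw [integral_finsetSum]
  · rw [Finset.smul_sum]
    refine Finset.sum_congr rfl fun x _ => ?_
    rw [integral_indicator_const _ (hm x), volume_cell hR]
  · intro x _
    exact (integrableOn_const (hv x)).integrable_indicator (hm x)

lemma lamS_nonneg (S : Finset (ℤ × ℤ)) (p : ℝ × ℝ) : 0 ≤ lamS S p :=
  Finset.sum_nonneg fun y _ => by linarith [Real.cos_le_one (dotp p y)]

lemma lamS_dirs (p : ℝ × ℝ) : lamS dirsZ p = 2 * (1 - cos p.1) + 2 * (1 - cos p.2) := by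
  unfold lamS dirsZ
  rw [Finset.sum_insert (by decide), Finset.sum_insert (by decide), Finset.sum_insert (by decide),
    Finset.sum_singleton]
  simp [dotp]
  ring

lemma dirs_sub {J : Finset (ℤ × ℤ)} (hJ : StepDist J) : dirsZ ⊆ J := by
  intro x hx
  simp only [dirsZ, Finset.mem_insert, Finset.mem_singleton] at hx
  rcases hx with rfl | rfl | rfl | rfl
  exacts [hJ.nn₁, hJ.nn₂, hJ.nn₃, hJ.nn₄]

lemma card_ge {J : Finset (ℤ × ℤ)} (hJ : StepDist J) : (4 : ℝ) ≤ J.card := by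
  have := Finset.card_le_card (dirs_sub hJ)
  have h4 : dirsZ.card = 4 := by decide
  rw [h4] at this
  exact_mod_cast this

lemma lamJ_ge {J : Finset (ℤ × ℤ)} (hJ : StepDist J) (p : ℝ × ℝ) :
    (J.card : ℝ)⁻¹ * lamS dirsZ p ≤ lamJ J p := by
  unfold lamJ
  have := card_ge hJ
  refine mul_le_mul_of_nonneg_left ?_ (by positivity)
  exact Finset.sum_le_sum_of_subset_of_nonneg (dirs_sub hJ)
    fun y _ _ => by linarith [Real.cos_le_one (dotp p y)]

lemma lam_le (p : ℝ × ℝ) : lamS dirsZ p ≤ 8 := by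
  rw [lamS_dirs]
  linarith [Real.neg_one_le_cos p.1, Real.neg_one_le_cos p.2]

lemma lam_ge (p : ℝ × ℝ) (h1 : |p.1| ≤ π) (h2 : |p.2| ≤ π) :
    4 / π ^ 2 * (p.1 ^ 2 + p.2 ^ 2) ≤ lamS dirsZ p := by
  rw [lamS_dirs]
  have a := Real.cos_le_one_sub_mul_cos_sq h1
  have b := Real.cos_le_one_sub_mul_cos_sq h2
  have e : 4 / π ^ 2 * (p.1 ^ 2 + p.2 ^ 2) = 
    2 * (2 / π ^ 2 * p.1 ^ 2) + 2 * (2 / π ^ 2 * p.2 ^ 2) := by ring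
  linarith

lemma s_small {J : Finset (ℤ × ℤ)} (hJ : StepDist J) {γ s : ℝ}
    (hγ : γ ∈ Set.Ioo (0 : ℝ) (1 / 3)) (hs : |s| ≤ (4 * (J.card : ℝ))⁻¹) : |s * γ * 8| ≤ 1 / 2 := by
  have h4 := card_ge hJ
  have : (4 * (J.card : ℝ))⁻¹ ≤ 1 / 16 := by
    rw [inv_le_comm₀ (by positivity) (by norm_num)]; linarith
  rw [abs_mul, abs_mul, abs_of_pos hγ.1, abs_of_pos (by norm_num : (0 : ℝ) < 8)]
  nlinarith [hγ.1, hγ.2, abs_nonneg s]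

lemma symQ_bd {J : Finset (ℤ × ℤ)} (hJ : StepDist J) {γ s : ℝ}
    (hγ : γ ∈ Set.Ioo (0 : ℝ) (1 / 3)) (hs : |s| ≤ (4 * (J.card : ℝ))⁻¹) (p : ℝ × ℝ) : 1 / 2 ≤ symQ γ s p ∧ symQ γ s p ≤ 2 := by
  have h := s_small hJ hγ hs
  have h0 := lamS_nonneg dirsZ p
  have h8 := lam_le p
  have : |s * γ * lamS dirsZ p| ≤ 1 / 2 := by
    refine le_trans ?_ h
    rw [abs_mul, abs_mul (s * γ), abs_of_nonneg h0, abs_of_pos (by norm_num : (0 : ℝ) < 8)]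
    gcongr
  rw [abs_le] at this
  unfold symQ
  constructor <;> linarith [this.1, this.2]

lemma symD_ge {J : Finset (ℤ × ℤ)} (hJ : StepDist J) {γ s : ℝ}
    (hγ : γ ∈ Set.Ioo (0 : ℝ) (1 / 3)) (hs : |s| ≤ (4 * (J.card : ℝ))⁻¹) (p : ℝ × ℝ) : (4 * (J.card : ℝ))⁻¹ * lamS dirsZ p ≤ symD J γ s p := by
  have h4 := card_ge hJ
  have hq := symQ_bd hJ hγ hs p
  have h0 := lamS_nonneg dirsZ p
  have hl := lamJ_ge hJ p
  have hc : (0 : ℝ) < (J.card : ℝ)⁻¹ := by positivity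
  have hc' : (4 * (J.card : ℝ))⁻¹ = (J.card : ℝ)⁻¹ / 4 := by field_simp
  rw [hc'] at hs ⊢
  set c := (J.card : ℝ)⁻¹
  unfold symD
  have h1 : c * lamS dirsZ p * (1 / 2) ≤ lamJ J p * symQ γ s p :=
    mul_le_mul hl hq.1 (by norm_num) (le_trans (by positivity) hl)
  have h2 : -(c / 4) * lamS dirsZ p ≤ s * lamS dirsZ p :=
    mul_le_mul_of_nonneg_right (abs_le.mp hs).1 h0
  nlinarith

lemma symD_nonneg {J : Finset (ℤ × ℤ)} (hJ : StepDist J) {γ s : ℝ}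
    (hγ : γ ∈ Set.Ioo (0 : ℝ) (1 / 3)) (hs : |s| ≤ (4 * (J.card : ℝ))⁻¹) (p : ℝ × ℝ) : 0 ≤ symD J γ s p :=
  le_trans (mul_nonneg (by positivity) (lamS_nonneg _ _)) (symD_ge hJ hγ hs p)

lemma symD_ge' {J : Finset (ℤ × ℤ)} (hJ : StepDist J) {γ s : ℝ}
    (hγ : γ ∈ Set.Ioo (0 : ℝ) (1 / 3)) (hs : |s| ≤ (4 * (J.card : ℝ))⁻¹) (p : ℝ × ℝ) (h1 : |p.1| ≤ π) (h2 : |p.2| ≤ π) :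
    (π ^ 2 * (J.card : ℝ))⁻¹ * (p.1 ^ 2 + p.2 ^ 2) ≤ symD J γ s p := by
  refine le_trans ?_ (symD_ge hJ hγ hs p)
  have := lam_ge p h1 h2
  have h4 := card_ge hJ
  calc (π ^ 2 * (J.card : ℝ))⁻¹ * (p.1 ^ 2 + p.2 ^ 2) 
      = (4 * (J.card : ℝ))⁻¹ * (4 / π ^ 2 * (p.1 ^ 2 + p.2 ^ 2)) := by
        field_simp
    _ ≤ _ := by gcongr

lemma symQD_nonneg {J : Finset (ℤ × ℤ)} (hJ : StepDist J) {γ s : ℝ}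
    (hγ : γ ∈ Set.Ioo (0 : ℝ) (1 / 3)) (hs : |s| ≤ (4 * (J.card : ℝ))⁻¹) (p : ℝ × ℝ) : 0 ≤ symQ γ s p / symD J γ s p :=
  div_nonneg (by linarith [(symQ_bd hJ hγ hs p).1]) (symD_nonneg hJ hγ hs p)

/-- `(q/D)|p|² ≤ K` on the Brillouin zone. -/
lemma symQD_le {J : Finset (ℤ × ℤ)} (hJ : StepDist J) {γ s : ℝ}
    (hγ : γ ∈ Set.Ioo (0 : ℝ) (1 / 3)) (hs : |s| ≤ (4 * (J.card : ℝ))⁻¹) (p : ℝ × ℝ) (h1 : |p.1| ≤ π) (h2 : |p.2| ≤ π) :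
    symQ γ s p / symD J γ s p ≤ 2 * π ^ 2 * J.card / (p.1 ^ 2 + p.2 ^ 2) := by
  have h4 := card_ge hJ
  rcases eq_or_lt_of_le (add_nonneg (sq_nonneg p.1) (sq_nonneg p.2)) with h | h
  · have a : p.1 = 0 := by nlinarith [sq_nonneg p.1, sq_nonneg p.2]
    have b : p.2 = 0 := by nlinarith [sq_nonneg p.1, sq_nonneg p.2]
    have : symD J γ s p = 0 := by
      simp [symD, lamJ, lamS, dotp, a, b]
    rw [this, ← h]; simp
  · have hd := symD_ge' hJ hγ hs p h1 h2
    have hpos : 0 < (π ^ 2 * (J.card : ℝ))⁻¹ * (p.1 ^ 2 + p.2 ^ 2) := by positivity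
    calc symQ γ s p / symD J γ s p ≤ 2 / ((π ^ 2 * (J.card : ℝ))⁻¹ * (p.1 ^ 2 + p.2 ^ 2)) :=
          div_le_div₀ (by norm_num) (symQ_bd hJ hγ hs p).2 hpos hd
      _ = _ := by field_simp

lemma symD_pos {J : Finset (ℤ × ℤ)} (hJ : StepDist J) {γ s : ℝ}
    (hγ : γ ∈ Set.Ioo (0 : ℝ) (1 / 3)) (hs : |s| ≤ (4 * (J.card : ℝ))⁻¹) (p : ℝ × ℝ) (h1 : |p.1| ≤ π) (h2 : |p.2| ≤ π) (h : p ≠ 0) : 0 < symD J γ s p := by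
  refine lt_of_lt_of_le ?_ (symD_ge' hJ hγ hs p h1 h2)
  have h4 := card_ge hJ
  have : 0 < p.1 ^ 2 + p.2 ^ 2 := by
    rcases p with ⟨a, b⟩
    by_cases ha : a = 0
    · have hb : b ≠ 0 := by rintro rfl; exact h (by rw [ha]; rfl)
      positivity
    · positivity
  positivity

lemma vs_pos {J : Finset (ℤ × ℤ)} (hJ : StepDist J) {s : ℝ} (hs : |s| ≤ (4 * (J.card : ℝ))⁻¹) : 0 < vJsq J + s := by
  have h4 := card_ge hJ
  have h1 : (2 : ℝ) ≤ ∑ x ∈ J, ((x.1 : ℝ)) ^ 2 := by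
    have := Finset.sum_le_sum_of_subset_of_nonneg (f := fun x : ℤ × ℤ => ((x.1 : ℝ)) ^ 2)
      (dirs_sub hJ) (fun y _ _ => sq_nonneg _)
    refine le_trans ?_ this
    unfold dirsZ
    rw [Finset.sum_insert (by decide), Finset.sum_insert (by decide),
      Finset.sum_insert (by decide), Finset.sum_singleton]
    norm_num
  have h2 : (2 * (J.card : ℝ))⁻¹ * 2 ≤ vJsq J := by
    unfold vJsq; gcongr
  have h3 := (abs_le.mp hs).1
  have h5 : (2 * (J.card : ℝ))⁻¹ * 2 = 4 * (4 * (J.card : ℝ))⁻¹ := by field_simp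
  have : 0 < (4 * (J.card : ℝ))⁻¹ := by positivity
  linarith

lemma continuous_lamS (S : Finset (ℤ × ℤ)) : Continuous (lamS S) := by
  unfold lamS dotp; fun_prop

lemma continuous_symQ (γ s : ℝ) : Continuous (symQ γ s) := by
  have := continuous_lamS dirsZ
  unfold symQ; fun_prop

lemma continuous_symD (J) (γ s : ℝ) : Continuous (symD J γ s) := by
  have := continuous_lamS dirsZ
  have := continuous_lamS J
  have := continuous_symQ γ s
  unfold symD lamJ; fun_prop

lemma tendsto_one_sub_cos (x : ℝ) :
    Tendsto (fun ε : ℝ => (1 - cos (ε * x)) / ε ^ 2) (nhdsWithin 0 (Set.Ioi 0)) (nhds (x ^ 2 / 2)) := by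
  have h : Tendsto (fun ε : ℝ => x ^ 2 / 2 * sinc (ε * x / 2) ^ 2) (nhdsWithin 0 (Set.Ioi 0))
      (nhds (x ^ 2 / 2 * sinc (0 * x / 2) ^ 2)) := by
    have : Continuous (fun ε : ℝ => x ^ 2 / 2 * sinc (ε * x / 2) ^ 2) := by
      have := continuous_sinc
      fun_prop
    exact (this.tendsto 0).mono_left nhdsWithin_le_nhds
  simp only [zero_mul, zero_div, sinc_zero, one_pow, mul_one] at h
  refine h.congr' ?_
  filter_upwards [self_mem_nhdsWithin] with ε hε
  have hε : ε ≠ 0 := ne_of_gt hε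
  by_cases hx : x = 0
  · simp [hx]
  · rw [sinc_of_ne_zero (by positivity)]
    have : cos (ε * x) = 1 - 2 * sin (ε * x / 2) ^ 2 := by
      have := Real.cos_sq_add_sin_sq (ε * x / 2)
      have h2 := Real.cos_two_mul (ε * x / 2)
      rw [show 2 * (ε * x / 2) = ε * x by ring] at h2
      linarith
    rw [this]
    field_simp
    ring

lemma tendsto_lamS (S : Finset (ℤ × ℤ)) (k : ℝ × ℝ) :
    Tendsto (fun ε : ℝ => lamS S (ε • k) / ε ^ 2) (nhdsWithin 0 (Set.Ioi 0))
      (nhds (∑ y ∈ S, (dotp k y) ^ 2 / 2)) := by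
  have : (fun ε : ℝ => lamS S (ε • k) / ε ^ 2) = 
    fun ε => ∑ y ∈ S, (1 - cos (ε * dotp k y)) / ε ^ 2 := by
    funext ε
    rw [lamS, Finset.sum_div]
    refine Finset.sum_congr rfl fun y _ => ?_
    congr 3
    simp [dotp]; ring
  rw [this]
  exact tendsto_finsetSum _ fun y _ => tendsto_one_sub_cos _

lemma sum_dot_sq {J : Finset (ℤ × ℤ)} (hJ : StepDist J) (k : ℝ × ℝ) :
    ∑ y ∈ J, (dotp k y) ^ 2 / 2 = (k.1 ^ 2 + k.2 ^ 2) * (∑ y ∈ J, (y.1 : ℝ) ^ 2) / 2 := by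
  have h1 : ∑ y ∈ J, (y.1 : ℝ) ^ 2 = ∑ y ∈ J, (y.2 : ℝ) ^ 2 := by
    refine Finset.sum_nbij' (fun y => (-y.2, y.1)) (fun y => (y.2, -y.1)) hJ.rot ?_ ?_ ?_ ?_
    · intro y hy
      have := hJ.refl₂ _ (hJ.refl₁ _ (hJ.rot _ hy))
      simpa using this
    · intro y _; simp
    · intro y _; simp
    · intro y _; simp
  have h2 : ∑ y ∈ J, (y.1 * y.2 : ℝ) = 0 := by
    have : ∑ y ∈ J, (y.1 * y.2 : ℝ) = ∑ y ∈ J, -(y.1 * y.2 : ℝ) := by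
      refine Finset.sum_nbij' (fun y => (-y.1, y.2)) (fun y => (-y.1, y.2)) hJ.refl₁ hJ.refl₁ ?_ ?_ ?_
      · intro y _; simp
      · intro y _; simp
      · intro y _; simp
    rw [Finset.sum_neg_distrib] at this
    linarith
  have : ∀ y : ℤ × ℤ, (dotp k y) ^ 2 / 2 = k.1 ^ 2 / 2 * (y.1 : ℝ) ^ 2 + k.2 ^ 2 / 2 * (y.2 : ℝ) ^ 2 +
      k.1 * k.2 * (y.1 * y.2 : ℝ) := by intro y; simp only [dotp]; ring
  simp_rw [this]
  rw [Finset.sum_add_distrib, Finset.sum_add_distrib, ← Finset.mul_sum, ← Finset.mul_sum,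
    ← Finset.mul_sum, h2, ← h1]
  ring

lemma tendsto_symD {J : Finset (ℤ × ℤ)} (hJ : StepDist J) (γ s : ℝ) (k : ℝ × ℝ) :
    Tendsto (fun ε : ℝ => symD J γ s (ε • k) / ε ^ 2) (nhdsWithin 0 (Set.Ioi 0))
      (nhds ((vJsq J + s) * (k.1 ^ 2 + k.2 ^ 2))) := by
  have h1 := tendsto_lamS J k
  have h2 := tendsto_lamS dirsZ k
  have h2' : ∑ y ∈ dirsZ, (dotp k y) ^ 2 / 2 = k.1 ^ 2 + k.2 ^ 2 := by
    unfold dirsZ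
    rw [Finset.sum_insert (by decide), Finset.sum_insert (by decide),
      Finset.sum_insert (by decide), Finset.sum_singleton]
    simp [dotp]
    ring
  rw [h2'] at h2
  rw [sum_dot_sq hJ] at h1
  have h3 : Tendsto (fun ε : ℝ => symQ γ s (ε • k)) (nhdsWithin 0 (Set.Ioi 0)) (nhds 1) := by
    have hc : Continuous (fun ε : ℝ => symQ γ s (ε • k)) := by
      have := continuous_symQ γ s
      fun_prop
    have := (hc.tendsto 0).mono_left (nhdsWithin_le_nhds (s := Set.Ioi 0))
    simpa [symQ, lamS, dotp] using this
  have := ((h1.const_mul (J.card : ℝ)⁻¹).mul h3).add (h2.const_mul s)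
  convert this using 2
  · simp only [symD, lamJ]; ring
  · simp only [vJsq]
    by_cases hc : (J.card : ℝ) = 0
    · simp [hc]
    · field_simp

lemma tendsto_symQ (γ s : ℝ) (k : ℝ × ℝ) :
    Tendsto (fun ε : ℝ => symQ γ s (ε • k)) (nhdsWithin 0 (Set.Ioi 0)) (nhds 1) := by
  have hc : Continuous (fun ε : ℝ => symQ γ s (ε • k)) := by
    have := continuous_symQ γ s
    fun_prop
  have := (hc.tendsto 0).mono_left (nhdsWithin_le_nhds (s := Set.Ioi 0))
  simpa [symQ, lamS, dotp] using this

lemma latFT_eq_sum (g : ℤ × ℤ → ℝ) (S : Finset (ℤ × ℤ)) (hS : ∀ x, g x ≠ 0 → x ∈ S) (p : ℝ × ℝ) :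
    latFT g p = ∑ x ∈ S, (g x : ℂ) * Complex.exp (-Complex.I * (dotp p x : ℂ)) := by
  refine tsum_eq_sum fun x hx => ?_
  have : g x = 0 := by by_contra h; exact hx (hS x h)
  simp [this]

lemma norm_e (θ : ℝ) : ‖Complex.exp (-Complex.I * (θ : ℂ))‖ = 1 := by
  have : -Complex.I * (θ : ℂ) = ((-θ : ℝ) : ℂ) * Complex.I := by push_cast; ring
  rw [this, Complex.norm_exp_ofReal_mul_I]

lemma norm_e_sub (θ : ℝ) : ‖Complex.exp (-Complex.I * (θ : ℂ)) - 1‖ ≤ |θ| := by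
  have : -Complex.I * (θ : ℂ) = Complex.I * ((-θ : ℝ) : ℂ) := by push_cast; ring
  rw [this]
  refine le_trans Real.norm_exp_I_mul_ofReal_sub_one_le ?_
  simp

lemma norm_e_sub_ge (θ : ℝ) (h : |θ| ≤ π) :
    |θ| ≤ 2 * ‖Complex.exp (Complex.I * (θ : ℂ)) - 1‖ := by
  have h1 : ‖Complex.exp (Complex.I * (θ : ℂ)) - 1‖ ^ 2 = 2 * (1 - cos θ) := by
    rw [mul_comm, Complex.exp_mul_I, ← Complex.normSq_eq_norm_sq, Complex.normSq_apply]
    simp [← Complex.ofReal_cos, ← Complex.ofReal_sin]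
    nlinarith [Real.sin_sq_add_cos_sq θ]
  have h2 := Real.cos_le_one_sub_mul_cos_sq h
  refine abs_le_of_sq_le_sq ?_ (by positivity)
  rw [mul_pow, h1]
  have h3 : (1 / 8 : ℝ) ≤ 2 / π ^ 2 := by
    rw [div_le_div_iff₀ (by norm_num) (by positivity)]
    nlinarith [Real.pi_le_four, Real.pi_pos]
  nlinarith [sq_nonneg θ]

lemma latFT_norm_le (g : ℤ × ℤ → ℝ) (S : Finset (ℤ × ℤ)) (hS : ∀ x, g x ≠ 0 → x ∈ S) (c : ℝ)
    (hc : ∀ x, |g x| ≤ c) (p : ℝ × ℝ) : ‖latFT g p‖ ≤ S.card * c := by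
  rw [latFT_eq_sum g S hS]
  refine le_trans (norm_sum_le _ _) ?_
  rw [← nsmul_eq_mul]
  refine Finset.sum_le_card_nsmul _ _ _ fun x _ => ?_
  rw [norm_mul, norm_e, mul_one, Complex.norm_real]
  exact hc x

lemma latFT_shift (g : ℤ × ℤ → ℝ) (hg : (Function.support g).Finite) (μ : ℤ × ℤ) (p : ℝ × ℝ) :
    latFT (fun x => g (x + μ) - g x) p = 
      (Complex.exp (Complex.I * (dotp p μ : ℂ)) - 1) * latFT g p := by
  have hsum : ∀ h : ℤ × ℤ → ℝ, (Function.support h).Finite → 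
      Summable (fun x => (h x : ℂ) * Complex.exp (-Complex.I * (dotp p x : ℂ))) := by
    intro h hh
    refine summable_of_hasFiniteSupport (hh.subset ?_)
    intro x hx
    simp only [Function.mem_support] at hx ⊢
    intro h0
    exact hx (by simp [h0])
  have hg2 : (Function.support (fun x => g (x + μ))).Finite := by
    have := hg.preimage (f := fun x => x + μ) (add_left_injective μ).injOn
    exact this
  have e1 : latFT (fun x => g (x + μ)) p = Complex.exp (Complex.I * (dotp p μ : ℂ)) * latFT g p := by
    unfold latFT
    rw [← tsum_mul_left, ← (Equiv.addRight μ).tsum_eq (fun x => 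
      Complex.exp (Complex.I * (dotp p μ : ℂ)) * ((g x : ℂ) * Complex.exp (-Complex.I * (dotp p x : ℂ))))]
    congr 1
    funext x
    simp only [Equiv.coe_addRight]
    rw [mul_left_comm, ← Complex.exp_add]
    congr 2
    simp [dotp]
    ring
  rw [sub_mul, ← e1, one_mul]
  unfold latFT
  rw [← (hsum _ hg2).tsum_sub (hsum _ hg)]
  congr 1
  funext x
  push_cast
  ring

lemma continuous_latFT (g : ℤ × ℤ → ℝ) (hg : (Function.support g).Finite) : 
    Continuous (latFT g) := by
  have : latFT g = fun p => ∑ x ∈ hg.toFinset, (g x : ℂ) * Complex.exp (-Complex.I * (dotp p x : ℂ)) := by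
    funext p
    exact latFT_eq_sum g _ (by simp) p
  rw [this]
  unfold dotp
  fun_prop

def zbox (M : ℤ) : Finset (ℤ × ℤ) := Finset.Icc (-M) M ×ˢ Finset.Icc (-M) M

lemma mem_zbox {M : ℤ} {x : ℤ × ℤ} : x ∈ zbox M ↔ |x.1| ≤ M ∧ |x.2| ≤ M := by
  simp [zbox, abs_le]

lemma card_zbox {M : ℤ} (hM : 0 ≤ M) : ((zbox M).card : ℝ) = (2 * M + 1) ^ 2 := by
  have : (((M + 1 - -M).toNat : ℕ) : ℤ) = 2 * M + 1 := by
    rw [Int.toNat_of_nonneg (by linarith)]; ring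
  have h2 : (((M + 1 - -M).toNat : ℕ) : ℝ) = 2 * M + 1 := by exact_mod_cast this
  rw [zbox, Finset.card_product, Int.card_Icc]
  push_cast
  rw [h2]; ring

section adm
variable {f : ℝ × ℝ → ℝ} {fε : ℝ → (ℤ × ℤ) → ℝ} {Cf : ℝ} 

lemma Cf_nonneg (hA : IsAdmissible f fε Cf) : 0 ≤ Cf := by
  have := hA.grad0 (1 / 2) (by norm_num) 0
  have h2 := abs_nonneg (fε (1 / 2) 0)
  nlinarith

def bigM (Cf ε : ℝ) : ℤ := ⌊Cf * ε⁻¹⌋ + 1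

lemma card_bigM (hA : IsAdmissible f fε Cf) {ε : ℝ} (hε : ε ∈ Set.Ioo (0 : ℝ) 1) :
    ((zbox (bigM Cf ε)).card : ℝ) ≤ (2 * Cf + 3) ^ 2 * (ε ^ 2)⁻¹ := by
  have h0 := Cf_nonneg hA
  have hε0 := hε.1
  have hM0 : 0 ≤ bigM Cf ε := by
    have : 0 ≤ ⌊Cf * ε⁻¹⌋ := Int.floor_nonneg.mpr (by positivity)
    unfold bigM; linarith
  rw [card_zbox hM0]
  have h1 : (bigM Cf ε : ℝ) ≤ Cf * ε⁻¹ + 1 := by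
    unfold bigM; push_cast; linarith [Int.floor_le (Cf * ε⁻¹)]
  have h2 : 1 ≤ ε⁻¹ := (one_le_inv₀ hε0).mpr hε.2.le
  have h3 : (0 : ℝ) ≤ bigM Cf ε := by exact_mod_cast hM0
  have h4 : 2 * (bigM Cf ε : ℝ) + 1 ≤ (2 * Cf + 3) * ε⁻¹ := by nlinarith
  calc (2 * (bigM Cf ε : ℝ) + 1) ^ 2 ≤ ((2 * Cf + 3) * ε⁻¹) ^ 2 := by gcongr
    _ = _ := by rw [mul_pow, inv_pow]

lemma abs_le_floor (hA : IsAdmissible f fε Cf) {ε : ℝ} (hε : ε ∈ Set.Ioo (0 : ℝ) 1) {x : ℤ × ℤ}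
    (hx : fε ε x ≠ 0) : |x.1| ≤ ⌊Cf * ε⁻¹⌋ ∧ |x.2| ≤ ⌊Cf * ε⁻¹⌋ := by
  have := hA.supp ε hε x hx
  constructor
  · exact Int.le_floor.mpr (by push_cast; exact this.1)
  · exact Int.le_floor.mpr (by push_cast; exact this.2)

lemma supp_bigM (hA : IsAdmissible f fε Cf) {ε : ℝ} (hε : ε ∈ Set.Ioo (0 : ℝ) 1) {x : ℤ × ℤ}
    (hx : fε ε x ≠ 0) : x ∈ zbox (bigM Cf ε) := by
  have := abs_le_floor hA hε hx
  rw [mem_zbox, bigM]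
  exact ⟨by linarith [this.1], by linarith [this.2]⟩

lemma supp_bigM' (hA : IsAdmissible f fε Cf) {ε : ℝ} (hε : ε ∈ Set.Ioo (0 : ℝ) 1) {x μ : ℤ × ℤ}
    (hμ : μ ∈ dirsZ) (hx : fε ε (x + μ) - fε ε x ≠ 0) : x ∈ zbox (bigM Cf ε) := by
  by_cases h : fε ε x = 0
  · have h2 : fε ε (x + μ) ≠ 0 := by simpa [h] using hx
    have := abs_le_floor hA hε h2
    rw [mem_zbox, bigM]
    simp only [Prod.fst_add, Prod.snd_add, abs_le] at this ⊢
    simp only [dirsZ, Finset.mem_insert, Finset.mem_singleton] at hμ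
    rcases hμ with rfl | rfl | rfl | rfl <;> simp only at this <;> omega
  · exact supp_bigM hA hε h

def bndB (Cf : ℝ) : ℝ := 2 * (2 * Cf + 3) ^ 2 * Cf * (Cf + 1)

lemma bnd_small (hA : IsAdmissible f fε Cf) {ε : ℝ} (hε : ε ∈ Set.Ioo (0 : ℝ) 1) (k : ℝ × ℝ) :
    ‖latFT (fε ε) (ε • k)‖ ≤ bndB Cf * (|k.1| + |k.2|) := by
  have h0 := Cf_nonneg hA
  have hε0 := hε.1
  have hz : ∑ x ∈ zbox (bigM Cf ε), (fε ε x : ℂ) = 0 := by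
    have := hA.sum_zero ε hε
    rw [tsum_eq_sum (s := zbox (bigM Cf ε))] at this
    · exact_mod_cast this
    · intro x hx
      by_contra h
      exact hx (supp_bigM hA hε h)
  rw [latFT_eq_sum _ _ (fun x hx => supp_bigM hA hε hx)]
  have e : ∑ x ∈ zbox (bigM Cf ε), (fε ε x : ℂ) * Complex.exp (-Complex.I * (dotp (ε • k) x : ℂ)) =
      ∑ x ∈ zbox (bigM Cf ε), (fε ε x : ℂ) * 
        (Complex.exp (-Complex.I * (dotp (ε • k) x : ℂ)) - 1) := by
    simp_rw [mul_sub, mul_one]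
    rw [Finset.sum_sub_distrib, hz, sub_zero]
  rw [e]
  refine le_trans (norm_sum_le _ _) ?_
  have hterm : ∀ x ∈ zbox (bigM Cf ε), ‖(fε ε x : ℂ) * 
        (Complex.exp (-Complex.I * (dotp (ε • k) x : ℂ)) - 1)‖ ≤ 
          Cf * ε ^ 2 * (Cf * (|k.1| + |k.2|)) := by
    intro x _
    by_cases h : fε ε x = 0
    · simp only [h, Complex.ofReal_zero, zero_mul, norm_zero]; positivity
    · rw [norm_mul, Complex.norm_real]
      refine mul_le_mul (hA.grad0 ε hε x) (le_trans (norm_e_sub _) ?_) (norm_nonneg _) (by positivity)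
      have hs := hA.supp ε hε x h
      have : dotp (ε • k) x = k.1 * (ε * x.1) + k.2 * (ε * x.2) := by simp [dotp]; ring
      rw [this]
      have b1 : |ε * (x.1 : ℝ)| ≤ Cf := by
        rw [abs_mul, abs_of_pos hε0]
        calc ε * |(x.1 : ℝ)| ≤ ε * (Cf * ε⁻¹) := by gcongr; exact hs.1
          _ = Cf := by field_simp
      have b2 : |ε * (x.2 : ℝ)| ≤ Cf := by
        rw [abs_mul, abs_of_pos hε0]
        calc ε * |(x.2 : ℝ)| ≤ ε * (Cf * ε⁻¹) := by gcongr; exact hs.2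
          _ = Cf := by field_simp
      refine le_trans (abs_add_le _ _) ?_
      rw [abs_mul, abs_mul k.2]
      have := mul_le_mul_of_nonneg_left b1 (abs_nonneg k.1)
      have := mul_le_mul_of_nonneg_left b2 (abs_nonneg k.2)
      linarith
  refine le_trans (Finset.sum_le_card_nsmul _ _ _ hterm) ?_
  rw [nsmul_eq_mul]
  have hc := card_bigM hA hε
  calc ((zbox (bigM Cf ε)).card : ℝ) * (Cf * ε ^ 2 * (Cf * (|k.1| + |k.2|))) 
      ≤ (2 * Cf + 3) ^ 2 * (ε ^ 2)⁻¹ * (Cf * ε ^ 2 * (Cf * (|k.1| + |k.2|))) := by gcongr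
    _ = (2 * Cf + 3) ^ 2 * Cf * Cf * (|k.1| + |k.2|) := by field_simp
    _ ≤ bndB Cf * (|k.1| + |k.2|) := by
        unfold bndB
        gcongr ?_ * _
        have : 0 ≤ (2 * Cf + 3) ^ 2 * Cf := by positivity
        nlinarith

lemma bnd_large (hA : IsAdmissible f fε Cf) {ε : ℝ} (hε : ε ∈ Set.Ioo (0 : ℝ) 1) (k : ℝ × ℝ)
    (μ : ℤ × ℤ) (hμ : μ ∈ dirsZ) (hk : |ε * dotp k μ| ≤ π) :
    |dotp k μ| * ‖latFT (fε ε) (ε • k)‖ ≤ bndB Cf := by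
  have h0 := Cf_nonneg hA
  have hε0 := hε.1
  have hd : dotp (ε • k) μ = ε * dotp k μ := by simp [dotp]; ring
  have h1 := latFT_norm_le (fun x => fε ε (x + μ) - fε ε x) (zbox (bigM Cf ε))
    (fun x hx => supp_bigM' hA hε hμ hx) (Cf * ε ^ 2 * ε) (by
      intro x
      have := hA.grad1 ε hε x μ hμ
      rw [abs_mul, abs_inv, abs_of_pos hε0, inv_mul_le_iff₀ hε0] at this
      linarith) (ε • k)
  rw [latFT_shift _ (hA.finite_supp ε hε), norm_mul, hd] at h1
  have h2 := norm_e_sub_ge _ hk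
  have hc := card_bigM hA hε
  have h3 : ((zbox (bigM Cf ε)).card : ℝ) * (Cf * ε ^ 2 * ε) ≤ (2 * Cf + 3) ^ 2 * Cf * ε := by
    calc ((zbox (bigM Cf ε)).card : ℝ) * (Cf * ε ^ 2 * ε) 
      ≤ (2 * Cf + 3) ^ 2 * (ε ^ 2)⁻¹ * (Cf * ε ^ 2 * ε) := by gcongr
    _ = _ := by field_simp
  have h4 : ε * (|dotp k μ| * ‖latFT (fε ε) (ε • k)‖) ≤ ε * (2 * (2 * Cf + 3) ^ 2 * Cf) := by
    rw [abs_mul, abs_of_pos hε0] at h2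
    have := mul_le_mul_of_nonneg_right h2 (norm_nonneg (latFT (fε ε) (ε • k)))
    linarith
  have h5 := le_of_mul_le_mul_left h4 hε0
  refine le_trans h5 ?_
  unfold bndB
  have : 0 ≤ 2 * (2 * Cf + 3) ^ 2 * Cf := by positivity
  nlinarith

lemma bnd_main (hA : IsAdmissible f fε Cf) {ε : ℝ} (hε : ε ∈ Set.Ioo (0 : ℝ) 1) (k : ℝ × ℝ)
    (h1 : |ε * k.1| ≤ π) (h2 : |ε * k.2| ≤ π) :
    Complex.normSq (latFT (fε ε) (ε • k)) / (k.1 ^ 2 + k.2 ^ 2) ≤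
      8 * bndB Cf ^ 2 * ((1 + k.1 ^ 2)⁻¹ * (1 + k.2 ^ 2)⁻¹) := by
  have hB : 0 ≤ bndB Cf := by have := Cf_nonneg hA; unfold bndB; positivity
  have a := bnd_small hA hε k
  have b := bnd_large hA hε k (1, 0) (by decide) (by simpa [dotp] using h1)
  have c := bnd_large hA hε k (0, 1) (by decide) (by simpa [dotp] using h2)
  have e1 : dotp k (1, 0) = k.1 := by simp [dotp]
  have e2 : dotp k (0, 1) = k.2 := by simp [dotp]
  rw [e1] at b
  rw [e2] at c
  rw [Complex.normSq_eq_norm_sq]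
  set X := ‖latFT (fε ε) (ε • k)‖
  set B := bndB Cf
  have hX : 0 ≤ X := norm_nonneg _
  have b2 : k.1 ^ 2 * X ^ 2 ≤ B ^ 2 := by
    rw [← sq_abs k.1, ← mul_pow]; gcongr
  have c2 : k.2 ^ 2 * X ^ 2 ≤ B ^ 2 := by
    rw [← sq_abs k.2, ← mul_pow]; gcongr
  have a2 : X ^ 2 ≤ 2 * B ^ 2 * (k.1 ^ 2 + k.2 ^ 2) := by
    calc X ^ 2 ≤ (B * (|k.1| + |k.2|)) ^ 2 := by gcongr
      _ = B ^ 2 * (|k.1| + |k.2|) ^ 2 := by ring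
      _ ≤ B ^ 2 * (2 * (k.1 ^ 2 + k.2 ^ 2)) := by
        gcongr
        nlinarith [sq_abs k.1, sq_abs k.2, sq_nonneg (|k.1| - |k.2|)]
      _ = _ := by ring
  rcases eq_or_lt_of_le (add_nonneg (sq_nonneg k.1) (sq_nonneg k.2)) with h | h
  · rw [← h, div_zero]; positivity
  · set r := k.1 ^ 2 + k.2 ^ 2 with hr
    have d2 : X ^ 2 * r ≤ 2 * B ^ 2 := by rw [hr]; linarith
    have e2 : X ^ 2 ≤ 2 * B ^ 2 := by
      rcases le_total r 1 with h' | h'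
      · nlinarith [sq_nonneg B]
      · nlinarith [sq_nonneg X]
    have key : X ^ 2 / r ≤ 8 * B ^ 2 * ((1 + r) ^ 2)⁻¹ := by
      rw [← div_eq_mul_inv, div_le_div_iff₀ h (by positivity)]
      nlinarith [mul_le_mul_of_nonneg_right d2 h.le, mul_le_mul_of_nonneg_right e2 h.le]
    refine le_trans key ?_
    rw [← mul_inv]
    gcongr
    rw [hr]
    nlinarith [sq_nonneg k.1, sq_nonneg k.2, mul_nonneg (sq_nonneg k.1) (sq_nonneg k.2), sq_nonneg (k.1^2), sq_nonneg (k.2^2)]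
end adm

lemma flr_close {R : ℝ} (hR : 0 < R) (t : ℝ) : |(⌊R * t⌋ : ℝ) / R - t| ≤ 1 / R := by
  have h1 := Int.floor_le (R * t)
  have h2 := Int.lt_floor_add_one (R * t)
  have : (⌊R * t⌋ : ℝ) / R - t = (⌊R * t⌋ - R * t) / R := by field_simp
  rw [this, abs_div, abs_of_pos hR]
  gcongr
  rw [abs_le]; constructor <;> linarith

lemma flr_tendsto {α : Type*} {l : Filter α} {R : α → ℝ} (hR : Tendsto R l atTop) (t : ℝ) :
    Tendsto (fun a => (⌊R a * t⌋ : ℝ) / R a) l (nhds t) := by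
  rw [tendsto_iff_norm_sub_tendsto_zero]
  refine squeeze_zero' (Eventually.of_forall fun _ => norm_nonneg _) ?_ 
    (tendsto_const_nhds.div_atTop hR : Tendsto (fun a => 1 / R a) l (nhds 0))
  filter_upwards [hR.eventually_gt_atTop 0] with a ha
  exact flr_close ha t

def sqr (c : ℝ) : Set (ℝ × ℝ) := Set.Icc (-c) c ×ˢ Set.Icc (-c) c

lemma mem_sqr {c : ℝ} {t : ℝ × ℝ} : t ∈ sqr c ↔ |t.1| ≤ c ∧ |t.2| ≤ c := by
  simp only [sqr, Set.mem_prod, Set.mem_Icc, abs_le]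

lemma integrable_sqr (c M : ℝ) : Integrable ((sqr c).indicator (fun _ => M)) := by
  refine IntegrableOn.integrable_indicator (integrableOn_const ?_) 
    (measurableSet_Icc.prod measurableSet_Icc)
  exact (isCompact_Icc.prod isCompact_Icc).measure_lt_top.ne

lemma latFT_eq_integral {f : ℝ × ℝ → ℝ} {fε : ℝ → (ℤ × ℤ) → ℝ} {Cf : ℝ}
    (hA : IsAdmissible f fε Cf) {ε : ℝ} (hε : ε ∈ Set.Ioo (0 : ℝ) 1) (k : ℝ × ℝ) :
    latFT (fε ε) (ε • k) = ∫ t, (((ε⁻¹ ^ 2 * fε ε (flr ε⁻¹ t) : ℝ) : ℂ) *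
      Complex.exp (-Complex.I * (dotp (ε • k) (flr ε⁻¹ t) : ℂ))) := by
  have hε0 := hε.1
  have := integral_step (R := ε⁻¹) (by positivity) (fun x => (((ε⁻¹ ^ 2 * fε ε x : ℝ) : ℂ) *
      Complex.exp (-Complex.I * (dotp (ε • k) x : ℂ)))) (zbox (bigM Cf ε)) (by
        intro x hx
        have : fε ε x = 0 := by
          by_contra h; exact hx (supp_bigM hA hε h)
        simp [this])
  rw [this, latFT_eq_sum _ _ (fun x hx => supp_bigM hA hε hx), Finset.smul_sum]
  refine Finset.sum_congr rfl fun x _ => ?_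
  have : (ε : ℂ) ≠ 0 := by exact_mod_cast hε0.ne'
  rw [Complex.real_smul]
  push_cast
  field_simp

lemma tendsto_latFT {f : ℝ × ℝ → ℝ} (hf : Continuous f) {fε : ℝ → (ℤ × ℤ) → ℝ} {Cf : ℝ}
    (hA : IsAdmissible f fε Cf) (k : ℝ × ℝ) :
    Tendsto (fun ε => latFT (fε ε) (ε • k)) (nhdsWithin 0 (Set.Ioi 0)) (nhds (contFT f k)) := by
  have h01 : ∀ᶠ ε in nhdsWithin (0 : ℝ) (Set.Ioi 0), ε ∈ Set.Ioo (0 : ℝ) 1 :=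
    Ioo_mem_nhdsGT one_pos
  have h0 := Cf_nonneg hA
  have hR : Tendsto (fun ε : ℝ => ε⁻¹) (nhdsWithin 0 (Set.Ioi 0)) atTop := tendsto_inv_nhdsGT_zero
  have main : Tendsto (fun ε => ∫ t, (((ε⁻¹ ^ 2 * fε ε (flr ε⁻¹ t) : ℝ) : ℂ) *
      Complex.exp (-Complex.I * (dotp (ε • k) (flr ε⁻¹ t) : ℂ)))) (nhdsWithin 0 (Set.Ioi 0)) 
      (nhds (contFT f k)) := by
    unfold contFT
    refine tendsto_integral_filter_of_dominated_convergence ((sqr (Cf + 1)).indicator (fun _ => Cf))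
      ?_ ?_ (integrable_sqr _ _) ?_
    · refine Eventually.of_forall fun ε => ?_
      refine Measurable.aestronglyMeasurable ?_
      exact (measurable_of_countable (fun x : ℤ × ℤ => (((ε⁻¹ ^ 2 * fε ε x : ℝ) : ℂ) *
        Complex.exp (-Complex.I * (dotp (ε • k) x : ℂ))))).comp (measurable_flr _)
    · filter_upwards [h01] with ε hε
      refine Eventually.of_forall fun t => ?_
      have hε0 := hε.1
      rw [norm_mul, norm_e, mul_one, Complex.norm_real]
      by_cases h : fε ε (flr ε⁻¹ t) = 0
      · rw [h, mul_zero, norm_zero]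
        exact Set.indicator_nonneg (fun _ _ => h0) _
      · rw [Set.indicator_of_mem]
        · rw [Real.norm_eq_abs, abs_mul, abs_of_pos (by positivity)]
          have := hA.grad0 ε hε (flr ε⁻¹ t)
          calc ε⁻¹ ^ 2 * |fε ε (flr ε⁻¹ t)| ≤ ε⁻¹ ^ 2 * (Cf * ε ^ 2) := by gcongr
            _ = Cf := by field_simp
        · have hs := hA.supp ε hε _ h
          have aux : ∀ r : ℝ, |(⌊ε⁻¹ * r⌋ : ℝ)| ≤ Cf * ε⁻¹ → |r| ≤ Cf + 1 := by
            intro r hr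
            have h1 := flr_close (R := ε⁻¹) (by positivity) r
            have h2 : |(⌊ε⁻¹ * r⌋ : ℝ) / ε⁻¹| ≤ Cf := by
              rw [abs_div, abs_of_pos (by positivity : 0 < ε⁻¹), div_le_iff₀ (by positivity)]
              exact hr
            have h3 : 1 / ε⁻¹ ≤ 1 := by simpa using hε.2.le
            have h4 := abs_sub_abs_le_abs_sub r ((⌊ε⁻¹ * r⌋ : ℝ) / ε⁻¹)
            rw [abs_sub_comm] at h4
            linarith
          exact mem_sqr.mpr ⟨aux _ hs.1, aux _ hs.2⟩
    · refine Eventually.of_forall fun t => ?_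
      have t1 := flr_tendsto hR t.1
      have t2 := flr_tendsto hR t.2
      simp only [div_inv_eq_mul] at t1 t2
      refine Tendsto.mul ?_ ?_
      · refine (Complex.continuous_ofReal.tendsto _).comp ?_
        have hlim : Tendsto (fun ε : ℝ => f (ε * (flr ε⁻¹ t).1, ε * (flr ε⁻¹ t).2)) 
            (nhdsWithin 0 (Set.Ioi 0)) (nhds (f t)) := by
          refine (hf.tendsto t).comp ?_
          have := t1.prodMk_nhds t2
          refine this.congr fun ε => ?_
          simp only [flr]
          rw [mul_comm ε, mul_comm ε]
        have hdiff : Tendsto (fun ε : ℝ => ε⁻¹ ^ 2 * fε ε (flr ε⁻¹ t) - 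
            f (ε * (flr ε⁻¹ t).1, ε * (flr ε⁻¹ t).2)) (nhdsWithin 0 (Set.Ioi 0)) (nhds 0) := by
          rw [Metric.tendsto_nhds]
          intro δ hδ
          obtain ⟨ε₀, hε₀, H⟩ := hA.approx (δ / 2) (by positivity)
          filter_upwards [h01, Ioo_mem_nhdsGT hε₀] with ε h1 h2
          rw [Real.dist_eq, sub_zero]
          exact lt_of_le_of_lt (H ε h1 h2.2 _) (by linarith)
        have := hdiff.add hlim
        simpa using this
      · have : Tendsto (fun ε : ℝ => dotp (ε • k) (flr ε⁻¹ t)) (nhdsWithin 0 (Set.Ioi 0)) 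
            (nhds (k.1 * t.1 + k.2 * t.2)) := by
          have := (t1.const_mul k.1).add (t2.const_mul k.2)
          refine this.congr fun ε => ?_
          simp only [dotp, flr, Prod.smul_fst, Prod.smul_snd, smul_eq_mul]
          ring
        have hc : Continuous (fun r : ℝ => Complex.exp (-Complex.I * (r : ℂ))) := by fun_prop
        exact (hc.tendsto _).comp this
  refine main.congr' ?_
  filter_upwards [h01] with ε hε
  exact (latFT_eq_integral hA hε k).symm

def setS (n : ℕ) : Finset (ℤ × ℤ) :=
  (zbox n).filter fun x => (-(n : ℤ) < x.1 * 2 ∧ x.1 * 2 ≤ n) ∧ (-(n : ℤ) < x.2 * 2 ∧ x.2 * 2 ≤ n)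

lemma mem_setS {n : ℕ} {x : ℤ × ℤ} : x ∈ setS n ↔ 
    (-(n : ℤ) < x.1 * 2 ∧ x.1 * 2 ≤ n) ∧ (-(n : ℤ) < x.2 * 2 ∧ x.2 * 2 ≤ n) := by
  simp only [setS, Finset.mem_filter, mem_zbox, abs_le]
  constructor
  · exact fun h => h.2
  · intro h
    refine ⟨?_, h⟩
    omega

def pz (n : ℕ) (x : ℤ × ℤ) : ℝ × ℝ := (2 * π * (x.1 / n), 2 * π * (x.2 / n))

lemma sum_torus (n : ℕ) [NeZero n] (G : ℝ × ℝ → ℝ) :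
    ∑ k : Torus n, G (pk n k) = ∑ x ∈ setS n, G (pz n x) := by
  refine Finset.sum_nbij' (fun k => (k.1.valMinAbs, k.2.valMinAbs)) (torusProj n) ?_ ?_ ?_ ?_ ?_
  · intro k _
    exact mem_setS.mpr ⟨k.1.valMinAbs_mem_Ioc, k.2.valMinAbs_mem_Ioc⟩
  · simp
  · intro k _
    simp [torusProj]
  · intro x hx
    have := mem_setS.mp hx
    have a : ((x.1 : ZMod n)).valMinAbs = x.1 := (ZMod.valMinAbs_spec _ _).mpr ⟨rfl, this.1⟩
    have b : ((x.2 : ZMod n)).valMinAbs = x.2 := (ZMod.valMinAbs_spec _ _).mpr ⟨rfl, this.2⟩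
    simp [torusProj, a, b]
  · intro k _
    simp [pk, pz, mul_div_assoc]

def openQ : Set (ℝ × ℝ) := {t | |t.1| < 1 / 2 ∧ |t.2| < 1 / 2}

lemma ae_fst_ne (c : ℝ) : ∀ᵐ t : ℝ × ℝ, t.1 ≠ c :=
  Measure.quasiMeasurePreserving_fst.ae (compl_mem_ae_iff.2 (measure_singleton c))

lemma ae_snd_ne (c : ℝ) : ∀ᵐ t : ℝ × ℝ, t.2 ≠ c :=
  Measure.quasiMeasurePreserving_snd.ae (compl_mem_ae_iff.2 (measure_singleton c))

lemma setS_iff {n : ℕ} (hn : 0 < n) {x : ℤ × ℤ} : x ∈ setS n ↔ 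
    (-(1 / 2) < (x.1 : ℝ) / n ∧ (x.1 : ℝ) / n ≤ 1 / 2) ∧ 
    (-(1 / 2) < (x.2 : ℝ) / n ∧ (x.2 : ℝ) / n ≤ 1 / 2) := by
  have hn' : (0 : ℝ) < n := by exact_mod_cast hn
  have a : ∀ j : ℤ, (-(n : ℤ) < j * 2 ↔ -(1 / 2) < (j : ℝ) / n) := by
    intro j
    rw [lt_div_iff₀ hn', ← Int.cast_lt (R := ℝ)]
    push_cast
    constructor <;> intro h <;> linarith
  have b : ∀ j : ℤ, (j * 2 ≤ (n : ℤ) ↔ (j : ℝ) / n ≤ 1 / 2) := by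
    intro j
    rw [div_le_iff₀ hn', ← Int.cast_le (R := ℝ)]
    push_cast
    constructor <;> intro h <;> linarith
  rw [mem_setS, a, a, b, b]

lemma riemann_sum (G : ℝ × ℝ → ℝ) (M : ℝ) (hM : ∀ p : ℝ × ℝ, |p.1| ≤ π → |p.2| ≤ π → |G p| ≤ M)
    (hc : ∀ p : ℝ × ℝ, |p.1| ≤ π → |p.2| ≤ π → p ≠ 0 → ContinuousAt G p) :
    Tendsto (fun n : ℕ => ((n : ℝ) ^ 2)⁻¹ * ∑ x ∈ setS n, G (pz n x)) atTop 
      (nhds (∫ t, openQ.indicator (fun t => G ((2 * π) • t)) t)) := by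
  have hM0 : 0 ≤ M := le_trans (abs_nonneg _) (hM 0 (by simp [pi_pos.le]) (by simp [pi_pos.le]))
  have hR : Tendsto (fun n : ℕ => (n : ℝ)) atTop atTop := tendsto_natCast_atTop_atTop
  have main : Tendsto (fun n : ℕ => ∫ t, (if flr n t ∈ setS n then G (pz n (flr n t)) else 0))
      atTop (nhds (∫ t, openQ.indicator (fun t => G ((2 * π) • t)) t)) := by
    refine tendsto_integral_filter_of_dominated_convergence ((sqr 2).indicator (fun _ => M))
      ?_ ?_ (integrable_sqr _ _) ?_
    · refine Eventually.of_forall fun n => ?_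
      refine Measurable.aestronglyMeasurable ?_
      exact (measurable_of_countable (fun x : ℤ × ℤ => if x ∈ setS n then G (pz n x) else 0)).comp
        (measurable_flr _)
    · filter_upwards [eventually_ge_atTop 1] with n hn
      refine Eventually.of_forall fun t => ?_
      have hn' : (1 : ℝ) ≤ n := by exact_mod_cast hn
      split_ifs with h
      · have h' := (setS_iff (by omega)).mp h
        have aux : ∀ r : ℝ, -(1 / 2) < r → r ≤ 1 / 2 → |2 * π * r| ≤ π := by
          intro r h1 h2
          rw [abs_mul, abs_of_pos (by positivity : 0 < 2 * π)]
          have : |r| ≤ 1 / 2 := abs_le.mpr ⟨h1.le, h2⟩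
          nlinarith [pi_pos]
        have aux2 : ∀ r : ℝ, -(1 / 2) < (⌊n * r⌋ : ℝ) / n → (⌊n * r⌋ : ℝ) / n ≤ 1 / 2 → |r| ≤ 2 := by
          intro r h1 h2
          have h3 := flr_close (R := n) (by linarith) r
          have h4 : 1 / (n : ℝ) ≤ 1 := by
            rw [div_le_one (by linarith)]; exact hn'
          rw [abs_le] at h3 ⊢
          constructor <;> linarith [h3.1, h3.2]
        rw [Set.indicator_of_mem]
        · exact hM _ (aux _ h'.1.1 h'.1.2) (aux _ h'.2.1 h'.2.2)
        · exact mem_sqr.mpr ⟨aux2 _ h'.1.1 h'.1.2, aux2 _ h'.2.1 h'.2.2⟩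
      · rw [norm_zero]
        exact Set.indicator_nonneg (fun _ _ => hM0) _
    · filter_upwards [ae_fst_ne 0, ae_fst_ne (1 / 2), ae_fst_ne (-(1 / 2)), ae_snd_ne (1 / 2),
        ae_snd_ne (-(1 / 2))] with t h0 h1 h2 h3 h4
      have t1 := flr_tendsto hR t.1
      have t2 := flr_tendsto hR t.2
      by_cases ht : t ∈ openQ
      · rw [Set.indicator_of_mem ht]
        have hq := ht
        simp only [openQ, Set.mem_ofPred_eq, abs_lt] at hq
        have hlim : Tendsto (fun n : ℕ => G (pz n (flr n t))) atTop (nhds (G ((2 * π) • t))) := by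
          have hca : ContinuousAt G ((2 * π) • t) := by
            refine hc _ ?_ ?_ ?_
            · simp only [Prod.smul_fst, smul_eq_mul]
              rw [abs_mul, abs_of_pos (by positivity : 0 < 2 * π)]
              nlinarith [pi_pos, ht.1]
            · simp only [Prod.smul_snd, smul_eq_mul]
              rw [abs_mul, abs_of_pos (by positivity : 0 < 2 * π)]
              nlinarith [pi_pos, ht.2]
            · intro h
              have := congrArg Prod.fst h
              simp [pi_pos.ne', h0] at this
          refine hca.tendsto.comp ?_
          exact (t1.const_mul (2 * π)).prodMk_nhds (t2.const_mul (2 * π))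
        refine hlim.congr' ?_
        filter_upwards [eventually_gt_atTop 0, t1.eventually_const_lt hq.1.1, 
          t1.eventually_lt_const hq.1.2, t2.eventually_const_lt hq.2.1, 
          t2.eventually_lt_const hq.2.2] with n hn a1 a2 a3 a4
        rw [if_pos]
        exact (setS_iff hn).mpr ⟨⟨a1, a2.le⟩, ⟨a3, a4.le⟩⟩
      · rw [Set.indicator_of_notMem ht]
        have : ∀ᶠ n : ℕ in atTop, flr n t ∉ setS n := by
          have hout : (1 / 2 < t.1 ∨ t.1 < -(1 / 2)) ∨ (1 / 2 < t.2 ∨ t.2 < -(1 / 2)) := by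
            by_contra hcon
            push Not at hcon
            apply ht
            simp only [openQ, Set.mem_ofPred_eq, abs_lt]
            exact ⟨⟨lt_of_le_of_ne hcon.1.2 h2.symm, lt_of_le_of_ne hcon.1.1 h1⟩,
              ⟨lt_of_le_of_ne hcon.2.2 h4.symm, lt_of_le_of_ne hcon.2.1 h3⟩⟩
          rcases hout with (h | h) | (h | h)
          · filter_upwards [eventually_gt_atTop 0, t1.eventually_const_lt h] with n hn a h'
            have := ((setS_iff hn).mp h').1.2
            simp only [flr] at this
            linarith
          · filter_upwards [eventually_gt_atTop 0, t1.eventually_lt_const h] with n hn a h'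
            have := ((setS_iff hn).mp h').1.1
            simp only [flr] at this
            linarith
          · filter_upwards [eventually_gt_atTop 0, t2.eventually_const_lt h] with n hn a h'
            have := ((setS_iff hn).mp h').2.2
            simp only [flr] at this
            linarith
          · filter_upwards [eventually_gt_atTop 0, t2.eventually_lt_const h] with n hn a h'
            have := ((setS_iff hn).mp h').2.1
            simp only [flr] at this
            linarith
        refine tendsto_const_nhds.congr' ?_
        filter_upwards [this] with n hn
        rw [if_neg hn]
  refine main.congr' ?_
  filter_upwards [eventually_gt_atTop 0] with n hn
  rw [integral_step (R := n) (by exact_mod_cast hn) 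
    (fun x => if x ∈ setS n then G (pz n x) else 0) (setS n) (fun x hx => if_neg hx), smul_eq_mul]
  congr 1
  exact Finset.sum_congr rfl fun x hx => if_pos hx

/-- The integrand `|F(p)|² q(p)/D(p)`. -/
def symG (J : Finset (ℤ × ℤ)) (γ s : ℝ) (g : ℤ × ℤ → ℝ) (p : ℝ × ℝ) : ℝ :=
  Complex.normSq (latFT g p) * (symQ γ s p / symD J γ s p)

lemma pk_le (n : ℕ) [NeZero n] (k : Torus n) : |(pk n k).1| ≤ π ∧ |(pk n k).2| ≤ π := by
  have hn : (0 : ℝ) < n := by exact_mod_cast Nat.pos_of_ne_zero (NeZero.ne n)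
  have aux : ∀ j : ZMod n, |2 * π * (j.valMinAbs : ℝ) / n| ≤ π := by
    intro j
    have h := j.valMinAbs_mem_Ioc
    have h1 : -(n : ℝ) < j.valMinAbs * 2 := by exact_mod_cast h.1
    have h2 : (j.valMinAbs : ℝ) * 2 ≤ n := by exact_mod_cast h.2
    rw [abs_div, abs_of_pos hn, div_le_iff₀ hn, mul_assoc, mul_comm 2, mul_assoc, abs_mul,
      abs_of_pos pi_pos]
    gcongr
    rw [abs_le]
    exact ⟨h1.le, h2⟩
  exact ⟨aux _, aux _⟩

lemma latFT_zero {f : ℝ × ℝ → ℝ} {fε : ℝ → (ℤ × ℤ) → ℝ} {Cf : ℝ}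
    (hA : IsAdmissible f fε Cf) {ε : ℝ} (hε : ε ∈ Set.Ioo (0 : ℝ) 1) : latFT (fε ε) 0 = 0 := by
  have := bnd_small hA hε 0
  simpa using this

/-- The limit `m² ↓ 0`. -/
lemma limit_m {J : Finset (ℤ × ℤ)} (hJ : StepDist J) {γ s : ℝ}
    (hγ : γ ∈ Set.Ioo (0 : ℝ) (1 / 3)) (hs : |s| ≤ (4 * (J.card : ℝ))⁻¹)
    {f : ℝ × ℝ → ℝ} {fε : ℝ → (ℤ × ℤ) → ℝ} {Cf : ℝ}
    (hA : IsAdmissible f fε Cf) {ε : ℝ} (hε : ε ∈ Set.Ioo (0 : ℝ) 1) (n : ℕ) [NeZero n]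
    (V : ℝ → ℝ) (hV : ∀ m2 > (0 : ℝ), IsCtildeVal J n γ s m2 (toTorus n (fε ε)) (V m2)) :
    Tendsto V (nhdsWithin 0 (Set.Ioi 0)) 
      (nhds (((n : ℝ) ^ 2)⁻¹ * ∑ x ∈ setS n, symG J γ s (fε ε) (pz n x))) := by
  rw [← sum_torus]
  have : Tendsto (fun m2 : ℝ => ((n : ℝ) ^ 2)⁻¹ * ∑ k : Torus n, 
      Complex.normSq (latFT (fε ε) (pk n k)) *
      (symQ γ s (pk n k) / (symD J γ s (pk n k) + m2 * symQ γ s (pk n k)))) 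
      (nhdsWithin 0 (Set.Ioi 0)) 
      (nhds (((n : ℝ) ^ 2)⁻¹ * ∑ k : Torus n, symG J γ s (fε ε) (pk n k))) := by
    refine Tendsto.const_mul _ (tendsto_finsetSum _ fun k _ => ?_)
    unfold symG
    by_cases h0 : pk n k = 0
    · rw [h0, latFT_zero hA hε]; simp
    · have hD := symD_pos hJ hγ hs (pk n k) (pk_le n k).1 (pk_le n k).2 h0
      refine Tendsto.const_mul _ (tendsto_const_nhds.div ?_ hD.ne')
      have hc : Continuous (fun m2 : ℝ => symD J γ s (pk n k) + m2 * symQ γ s (pk n k)) := by 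
        fun_prop
      have := (hc.tendsto 0).mono_left (nhdsWithin_le_nhds (s := Set.Ioi 0))
      simpa using this
  refine this.congr' ?_
  filter_upwards [self_mem_nhdsWithin] with m2 hm
  have hm : 0 < m2 := hm
  refine (ctilde_val J hJ n γ s m2 (fε ε) (hA.finite_supp ε hε) _ ?_ (hV m2 hm)).symm
  intro k
  have h1 := symD_nonneg hJ hγ hs (pk n k)
  have h2 := (symQ_bd hJ hγ hs (pk n k)).1
  have : 0 < m2 * symQ γ s (pk n k) := mul_pos hm (by linarith)
  exact (by linarith : 0 < symD J γ s (pk n k) + m2 * symQ γ s (pk n k)).ne'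

lemma symG_nonneg {J : Finset (ℤ × ℤ)} (hJ : StepDist J) {γ s : ℝ}
    (hγ : γ ∈ Set.Ioo (0 : ℝ) (1 / 3)) (hs : |s| ≤ (4 * (J.card : ℝ))⁻¹)
    (g : ℤ × ℤ → ℝ) (p : ℝ × ℝ) : 0 ≤ symG J γ s g p :=
  mul_nonneg (Complex.normSq_nonneg _) (symQD_nonneg hJ hγ hs p)

lemma symG_le {J : Finset (ℤ × ℤ)} (hJ : StepDist J) {γ s : ℝ}
    (hγ : γ ∈ Set.Ioo (0 : ℝ) (1 / 3)) (hs : |s| ≤ (4 * (J.card : ℝ))⁻¹)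
    {f : ℝ × ℝ → ℝ} {fε : ℝ → (ℤ × ℤ) → ℝ} {Cf : ℝ}
    (hA : IsAdmissible f fε Cf) {ε : ℝ} (hε : ε ∈ Set.Ioo (0 : ℝ) 1) (k : ℝ × ℝ)
    (h1 : |ε * k.1| ≤ π) (h2 : |ε * k.2| ≤ π) :
    ε ^ 2 * symG J γ s (fε ε) (ε • k) ≤ 
      2 * π ^ 2 * J.card * (8 * bndB Cf ^ 2 * ((1 + k.1 ^ 2)⁻¹ * (1 + k.2 ^ 2)⁻¹)) := by
  have hε0 := hε.1
  have a := bnd_main hA hε k h1 h2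
  have b := symQD_le hJ hγ hs (ε • k) (by simpa using h1) (by simpa using h2)
  have hN := Complex.normSq_nonneg (latFT (fε ε) (ε • k))
  calc ε ^ 2 * symG J γ s (fε ε) (ε • k) 
      ≤ ε ^ 2 * (Complex.normSq (latFT (fε ε) (ε • k)) * 
        (2 * π ^ 2 * J.card / ((ε • k).1 ^ 2 + (ε • k).2 ^ 2))) := by
        unfold symG; gcongr
    _ = 2 * π ^ 2 * J.card * (Complex.normSq (latFT (fε ε) (ε • k)) / (k.1 ^ 2 + k.2 ^ 2)) := by
        simp only [Prod.smul_fst, Prod.smul_snd, smul_eq_mul, mul_pow, ← mul_add]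
        rw [← div_div]
        field_simp
    _ ≤ _ := by gcongr

/-- The limit `N → ∞`. -/
lemma limit_n {J : Finset (ℤ × ℤ)} (hJ : StepDist J) {γ s : ℝ}
    (hγ : γ ∈ Set.Ioo (0 : ℝ) (1 / 3)) (hs : |s| ≤ (4 * (J.card : ℝ))⁻¹)
    {f : ℝ × ℝ → ℝ} {fε : ℝ → (ℤ × ℤ) → ℝ} {Cf : ℝ}
    (hA : IsAdmissible f fε Cf) {ε : ℝ} (hε : ε ∈ Set.Ioo (0 : ℝ) 1) :
    Tendsto (fun n : ℕ => ((n : ℝ) ^ 2)⁻¹ * ∑ x ∈ setS n, symG J γ s (fε ε) (pz n x)) atTop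
      (nhds (∫ t, openQ.indicator (fun t => symG J γ s (fε ε) ((2 * π) • t)) t)) := by
  have hε0 := hε.1
  have hpos : 0 ≤ 2 * π ^ 2 * (J.card : ℝ) := by positivity
  refine riemann_sum _ ((ε ^ 2)⁻¹ * (2 * π ^ 2 * J.card * (8 * bndB Cf ^ 2))) ?_ ?_
  · intro p h1 h2
    rw [abs_of_nonneg (symG_nonneg hJ hγ hs _ p)]
    have hp : p = ε • (ε⁻¹ • p) := by rw [smul_smul, mul_inv_cancel₀ hε0.ne', one_smul]
    have e1 : ε * (ε⁻¹ • p).1 = p.1 := by simp [hε0.ne']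
    have e2 : ε * (ε⁻¹ • p).2 = p.2 := by simp [hε0.ne']
    have := symG_le hJ hγ hs hA hε (ε⁻¹ • p) (by rw [e1]; exact h1) (by rw [e2]; exact h2)
    rw [← hp] at this
    rw [← div_eq_inv_mul, le_div_iff₀ (by positivity), mul_comm]
    refine le_trans this ?_
    set k := ε⁻¹ • p
    have c1 : (1 + k.1 ^ 2)⁻¹ ≤ 1 := inv_le_one_of_one_le₀ (by nlinarith [sq_nonneg k.1])
    have c2 : (1 + k.2 ^ 2)⁻¹ ≤ 1 := inv_le_one_of_one_le₀ (by nlinarith [sq_nonneg k.2])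
    have c3 : (1 + k.1 ^ 2)⁻¹ * (1 + k.2 ^ 2)⁻¹ ≤ 1 := mul_le_one₀ c1 (by positivity) c2
    have : 0 ≤ 8 * bndB Cf ^ 2 := by positivity
    exact mul_le_mul_of_nonneg_left (mul_le_of_le_one_right this c3) hpos
  · intro p h1 h2 h0
    have hD := symD_pos hJ hγ hs p h1 h2 h0
    unfold symG
    refine ContinuousAt.mul ?_ ((continuous_symQ γ s).continuousAt.div 
      (continuous_symD J γ s).continuousAt hD.ne')
    exact (Complex.continuous_normSq.comp (continuous_latFT _ (hA.finite_supp ε hε))).continuousAt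

lemma S2_eq (G : ℝ × ℝ → ℝ) {ε : ℝ} (hε : 0 < ε) :
    (∫ t, openQ.indicator (fun t => G ((2 * π) • t)) t) = ((2 * π) ^ 2)⁻¹ * 
      ∫ k : ℝ × ℝ, {k : ℝ × ℝ | |ε * k.1| < π ∧ |ε * k.2| < π}.indicator 
        (fun k => ε ^ 2 * G (ε • k)) k := by
  have hpi := pi_pos
  have := Measure.integral_comp_smul (volume : Measure (ℝ × ℝ)) 
    ({k : ℝ × ℝ | |ε * k.1| < π ∧ |ε * k.2| < π}.indicator (fun k => ε ^ 2 * G (ε • k))) (2 * π / ε)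
  have hfr : Module.finrank ℝ (ℝ × ℝ) = 2 := by simp
  rw [hfr, abs_of_pos (by positivity), smul_eq_mul] at this
  have e : ∀ t : ℝ × ℝ, {k : ℝ × ℝ | |ε * k.1| < π ∧ |ε * k.2| < π}.indicator 
      (fun k => ε ^ 2 * G (ε • k)) ((2 * π / ε) • t) = 
      ε ^ 2 * openQ.indicator (fun t => G ((2 * π) • t)) t := by
    intro t
    have c : ε • ((2 * π / ε) • t) = (2 * π) • t := by
      rw [smul_smul]; congr 1; field_simp
    have c' : ∀ r : ℝ, (|ε * (2 * π / ε * r)| < π ↔ |r| < 1 / 2) := by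
      intro r
      have : ε * (2 * π / ε * r) = 2 * π * r := by field_simp
      rw [this, abs_mul, abs_of_pos (by positivity : 0 < 2 * π)]
      constructor
      · intro h; nlinarith
      · intro h; nlinarith
    have hm : ((2 * π / ε) • t ∈ {k : ℝ × ℝ | |ε * k.1| < π ∧ |ε * k.2| < π}) ↔ t ∈ openQ := by
      simp only [openQ, Set.mem_ofPred_eq, Prod.smul_fst, Prod.smul_snd, smul_eq_mul, c']
    by_cases h : t ∈ openQ
    · rw [Set.indicator_of_mem h, Set.indicator_of_mem (hm.mpr h), c]
    · rw [Set.indicator_of_notMem h, Set.indicator_of_notMem (fun h' => h (hm.mp h')), mul_zero]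
  simp_rw [e] at this
  rw [integral_const_mul] at this
  have h2 : (((2 * π / ε) ^ 2)⁻¹ : ℝ) = ε ^ 2 * ((2 * π) ^ 2)⁻¹ := by
    field_simp
  rw [h2, mul_assoc] at this
  exact mul_left_cancel₀ (by positivity) this

/-- The limit `ε → 0`. -/
lemma limit_eps {J : Finset (ℤ × ℤ)} (hJ : StepDist J) {γ s : ℝ}
    (hγ : γ ∈ Set.Ioo (0 : ℝ) (1 / 3)) (hs : |s| ≤ (4 * (J.card : ℝ))⁻¹)
    {f : ℝ × ℝ → ℝ} (hf : Continuous f) {fε : ℝ → (ℤ × ℤ) → ℝ} {Cf : ℝ}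
    (hA : IsAdmissible f fε Cf) :
    Tendsto (fun ε => ∫ t, openQ.indicator (fun t => symG J γ s (fε ε) ((2 * π) • t)) t)
      (nhdsWithin 0 (Set.Ioi 0)) (nhds ((vJsq J + s)⁻¹ * gffPairing f)) := by
  have h01 : ∀ᶠ ε in nhdsWithin (0 : ℝ) (Set.Ioi 0), ε ∈ Set.Ioo (0 : ℝ) 1 :=
    Ioo_mem_nhdsGT one_pos
  have hv := vs_pos hJ hs
  have e : (vJsq J + s)⁻¹ * gffPairing f = ((2 * π) ^ 2)⁻¹ * ∫ k : ℝ × ℝ, 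
      (vJsq J + s)⁻¹ * (Complex.normSq (contFT f k) / (k.1 ^ 2 + k.2 ^ 2)) := by
    rw [integral_const_mul, gffPairing]; ring
  rw [e]
  have main : Tendsto (fun ε : ℝ => ∫ k : ℝ × ℝ, 
      {k : ℝ × ℝ | |ε * k.1| < π ∧ |ε * k.2| < π}.indicator 
        (fun k => ε ^ 2 * symG J γ s (fε ε) (ε • k)) k) (nhdsWithin 0 (Set.Ioi 0))
      (nhds (∫ k : ℝ × ℝ, (vJsq J + s)⁻¹ * (Complex.normSq (contFT f k) / (k.1 ^ 2 + k.2 ^ 2)))) := by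
    refine tendsto_integral_filter_of_dominated_convergence (fun k => 
      2 * π ^ 2 * J.card * (8 * bndB Cf ^ 2 * ((1 + k.1 ^ 2)⁻¹ * (1 + k.2 ^ 2)⁻¹))) ?_ ?_ ?_ ?_
    · filter_upwards [h01] with ε hε
      refine Measurable.aestronglyMeasurable (Measurable.indicator ?_ ?_)
      · have m1 : Measurable (symG J γ s (fε ε)) := by
          unfold symG
          exact (Complex.continuous_normSq.comp 
            (continuous_latFT _ (hA.finite_supp ε hε))).measurable.mul 
            ((continuous_symQ γ s).measurable.div (continuous_symD J γ s).measurable)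
        exact (m1.comp (measurable_const_smul ε)).const_mul _
      · have o1 : IsOpen {k : ℝ × ℝ | |ε * k.1| < π} := isOpen_lt (by fun_prop) (by fun_prop)
        have o2 : IsOpen {k : ℝ × ℝ | |ε * k.2| < π} := isOpen_lt (by fun_prop) (by fun_prop)
        exact (o1.inter o2).measurableSet
    · filter_upwards [h01] with ε hε
      refine Eventually.of_forall fun k => ?_
      by_cases h : k ∈ {k : ℝ × ℝ | |ε * k.1| < π ∧ |ε * k.2| < π}
      · rw [Set.indicator_of_mem h, Real.norm_eq_abs, abs_of_nonneg 
          (mul_nonneg (sq_nonneg _) (symG_nonneg hJ hγ hs _ _))]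
        exact symG_le hJ hγ hs hA hε k h.1.le h.2.le
      · rw [Set.indicator_of_notMem h, norm_zero]; positivity
    · refine Integrable.const_mul (Integrable.const_mul ?_ _) _
      exact integrable_inv_one_add_sq.mul_prod integrable_inv_one_add_sq
    · filter_upwards [ae_fst_ne 0] with k hk
      have hr : 0 < k.1 ^ 2 + k.2 ^ 2 := by positivity
      have l1 := (Complex.continuous_normSq.tendsto _).comp (tendsto_latFT hf hA k)
      have l2 := (tendsto_symQ γ s k).div (tendsto_symD hJ γ s k) (by positivity)
      have l3 := l1.mul l2
      have e2 : Complex.normSq (contFT f k) * (1 / ((vJsq J + s) * (k.1 ^ 2 + k.2 ^ 2))) = 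
        (vJsq J + s)⁻¹ * (Complex.normSq (contFT f k) / (k.1 ^ 2 + k.2 ^ 2)) := by
        field_simp
      rw [e2] at l3
      refine l3.congr' ?_
      have small : ∀ r : ℝ, ∀ᶠ ε in nhdsWithin (0 : ℝ) (Set.Ioi 0), |ε * r| < π := by
        intro r
        have hc : Continuous (fun ε : ℝ => |ε * r|) := by fun_prop
        have := (hc.tendsto 0).mono_left (nhdsWithin_le_nhds (s := Set.Ioi 0))
        simp only [zero_mul, abs_zero] at this
        exact this.eventually_lt_const pi_pos
      filter_upwards [h01, small k.1, small k.2] with ε hε s1 s2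
      have hε0 := hε.1
      rw [Set.indicator_of_mem (show k ∈ {k : ℝ × ℝ | |ε * k.1| < π ∧ |ε * k.2| < π} from ⟨s1, s2⟩)]
      simp only [Function.comp, symG, Pi.div_apply]
      rw [div_div_eq_mul_div]
      ring
  refine (main.const_mul ((2 * π) ^ 2)⁻¹).congr' ?_
  filter_upwards [self_mem_nhdsWithin] with ε hε
  exact (S2_eq _ hε).symm

theorem ctilde_iterated_scaling_limit
    (L : ℕ) (hL : 1 < L) (J : Finset (ℤ × ℤ)) (hJ : StepDist J)
    (γ : ℝ) (hγ : γ ∈ Set.Ioo (0 : ℝ) (1 / 3)) :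
    ∃ s₀ > (0 : ℝ), ∀ s : ℝ, |s| ≤ s₀ →
      ∀ f : ℝ × ℝ → ℝ, ContDiff ℝ (⊤ : ℕ∞) f → HasCompactSupport f →
        (∫ x : ℝ × ℝ, f x) = 0 →
        ∀ (fε : ℝ → (ℤ × ℤ) → ℝ) (Cf : ℝ), IsAdmissible f fε Cf →
          ∀ V : ℝ → ℕ → ℝ → ℝ,
            (∀ ε ∈ Set.Ioo (0 : ℝ) 1, ∀ N : ℕ, ∀ m2 > (0 : ℝ),
              IsCtildeVal J (L ^ N) γ s m2 (toTorus (L ^ N) (fε ε)) (V ε N m2)) →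
            ∃ (S₁ : ℝ → ℕ → ℝ) (S₂ : ℝ → ℝ),
              (∀ ε ∈ Set.Ioo (0 : ℝ) 1, ∀ N : ℕ,
                Tendsto (V ε N) (nhdsWithin 0 (Set.Ioi 0)) (nhds (S₁ ε N))) ∧
              (∀ ε ∈ Set.Ioo (0 : ℝ) 1, Tendsto (S₁ ε) atTop (nhds (S₂ ε))) ∧
              Tendsto S₂ (nhdsWithin 0 (Set.Ioi 0))
                (nhds ((vJsq J + s)⁻¹ * gffPairing f)) := by
  have h4 := card_ge hJ
  refine ⟨(4 * (J.card : ℝ))⁻¹, by positivity, ?_⟩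
  intro s hs f hf _ _ fε Cf hA V hV
  have : NeZero L := ⟨by omega⟩
  refine ⟨fun ε N => (((L ^ N : ℕ) : ℝ) ^ 2)⁻¹ * 
      ∑ x ∈ setS (L ^ N), symG J γ s (fε ε) (pz (L ^ N) x),
    fun ε => ∫ t, openQ.indicator (fun t => symG J γ s (fε ε) ((2 * π) • t)) t, ?_, ?_, ?_⟩
  · intro ε hε N
    exact limit_m hJ hγ hs hA hε (L ^ N) (V ε N) (hV ε hε N)
  · intro ε hε
    exact (limit_n hJ hγ hs hA hε).comp (tendsto_pow_atTop_atTop_of_one_lt hL)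
  · exact limit_eps hJ hγ hs hf.continuous hA

end
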